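/- arXiv:2309.12962 — 6 statements merged into one kernel-verified Lean document; each statement's English description precedes it below -/
import Mathlib

section
/- Let X be a Lorentzian pre-length space that is locally causally closed and sufficiently causally connected, let T : X → ℝ be a locally anti-Lipschitz time function, and suppose the background metric of X is the null distance d_T of T and that (X, d_T) is a complete metric space. Assume X has τ-midpoints, and assume there exists c ∈ (0, 1/2] such that for every pair p ≪ q there is a τ-midpoint m of p and q with (1−c)·T(p) + c·T(q) ≤ T(m) ≤ c·T(p) + (1−c)·T(q). Then X is causally geodesic: for every x ≪ y there is a future-directed causal curve γ from x to y with L_τ(γ) = τ(x,y), and for every x < y with ¬(x ≪ y) there is a future-directed causal curve from x to y. -/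
open scoped ENNReal

/-- A Lorentzian pre-length space: a metric space together with a timelike relation `≪`,
a causal relation `≤`, and a lower semicontinuous time separation function
`τ : X × X → [0,∞]` satisfying the reverse triangle inequality. -/
structure LorentzianPreLengthSpace (X : Type*) [MetricSpace X] where
  timelike : X → X → Prop
  causal : X → X → Prop
  causal_refl : ∀ x, causal x x
  causal_trans : ∀ {x y z}, causal x y → causal y z → causal x z
  timelike_trans : ∀ {x y z}, timelike x y → timelike y z → timelike x z
  timelike_causal : ∀ {x y}, timelike x y → causal x y
  tau : X → X → ℝ≥0∞
  tau_lsc : LowerSemicontinuous fun p : X × X => tau p.1 p.2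
  tau_rev_triangle : ∀ {x y z}, causal x y → causal y z → tau x y + tau y z ≤ tau x z
  tau_eq_zero_of_not_causal : ∀ {x y}, ¬causal x y → tau x y = 0
  tau_pos_iff_timelike : ∀ {x y}, 0 < tau x y ↔ timelike x y

namespace LorentzianPreLengthSpace

variable {X : Type*} [MetricSpace X] (L : LorentzianPreLengthSpace X)

/-- The strict causal relation `x < y`. -/
def CausallyLt (x y : X) : Prop := L.causal x y ∧ x ≠ y

/-- A future-directed causal curve: a non-constant continuous map `γ : [a,b] → X`
with `γ s ≤ γ t` for `a ≤ s < t ≤ b`. -/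
def IsFutureCausalCurve (γ : ℝ → X) (a b : ℝ) : Prop :=
  a < b ∧ ContinuousOn γ (Set.Icc a b) ∧
    (∃ s ∈ Set.Icc a b, ∃ t ∈ Set.Icc a b, γ s ≠ γ t) ∧
    ∀ ⦃s t : ℝ⦄, a ≤ s → s < t → t ≤ b → L.causal (γ s) (γ t)

/-- A future-directed timelike curve. -/
def IsFutureTimelikeCurve (γ : ℝ → X) (a b : ℝ) : Prop :=
  a < b ∧ ContinuousOn γ (Set.Icc a b) ∧
    (∃ s ∈ Set.Icc a b, ∃ t ∈ Set.Icc a b, γ s ≠ γ t) ∧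
    ∀ ⦃s t : ℝ⦄, a ≤ s → s < t → t ≤ b → L.timelike (γ s) (γ t)

/-- The τ-length of a curve `γ : [a,b] → X`: the infimum over all partitions
`a = t 0 < t 1 < ⋯ < t N = b` of `∑ τ(γ(t i), γ(t (i+1)))`. -/
noncomputable def tauLength (γ : ℝ → X) (a b : ℝ) : ℝ≥0∞ :=
  ⨅ (N : ℕ) (t : Fin (N + 1) → ℝ) (_ : StrictMono t) (_ : t 0 = a)
      (_ : t (Fin.last N) = b),
    ∑ i : Fin N, L.tau (γ (t i.castSucc)) (γ (t i.succ))

/-- A distance realizer from `x` to `y`: a future-directed causal curve from `x` to `y`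
whose τ-length equals `τ(x,y)`. -/
def IsDistanceRealizer (γ : ℝ → X) (a b : ℝ) (x y : X) : Prop :=
  L.IsFutureCausalCurve γ a b ∧ γ a = x ∧ γ b = y ∧ L.tauLength γ a b = L.tau x y

/-- Causal path-connectedness: timelike related points are joined by timelike curves and
strictly causally related points by causal curves. -/
def CausallyPathConnected : Prop :=
  (∀ x y : X, L.timelike x y →
      ∃ (γ : ℝ → X) (a b : ℝ), L.IsFutureTimelikeCurve γ a b ∧ γ a = x ∧ γ b = y) ∧
    ∀ x y : X, L.CausallyLt x y →
      ∃ (γ : ℝ → X) (a b : ℝ), L.IsFutureCausalCurve γ a b ∧ γ a = x ∧ γ b = y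

/-- Sufficiently causally connected: path-connected, causally path-connected, and every
point lies on a timelike curve. -/
def SufficientlyCausallyConnected : Prop :=
  IsPathConnected (Set.univ : Set X) ∧ L.CausallyPathConnected ∧
    ∀ x : X, ∃ (γ : ℝ → X) (a b : ℝ),
      L.IsFutureTimelikeCurve γ a b ∧ ∃ s ∈ Set.Icc a b, γ s = x

/-- Locally causally closed: every point has a neighbourhood `U` on which the causal
relation is closed in the limit sense. -/
def LocallyCausallyClosed : Prop :=
  ∀ x : X, ∃ U ∈ nhds x, ∀ (p q : X) (pn qn : ℕ → X),
    (∀ n, pn n ∈ U) → (∀ n, qn n ∈ U) → p ∈ closure U → q ∈ closure U →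
    Filter.Tendsto pn Filter.atTop (nhds p) → Filter.Tendsto qn Filter.atTop (nhds q) →
    (∀ n, L.causal (pn n) (qn n)) → L.causal p q

/-- A time function: continuous and strictly increasing along the strict causal relation. -/
def IsTimeFunction (T : X → ℝ) : Prop :=
  Continuous T ∧ ∀ x y : X, L.CausallyLt x y → T x < T y

/-- A locally anti-Lipschitz function: every point has a neighbourhood `U` carrying a
metric `dU` such that `T q - T p ≤ dU p q` for causally related `p ≤ q` in `U`. -/
def IsLocallyAntiLipschitz (T : X → ℝ) : Prop :=
  ∀ x : X, ∃ U ∈ nhds x, ∃ dU : X → X → ℝ,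
    (∀ p ∈ U, ∀ q ∈ U, 0 ≤ dU p q) ∧
    (∀ p ∈ U, ∀ q ∈ U, (dU p q = 0 ↔ p = q)) ∧
    (∀ p ∈ U, ∀ q ∈ U, dU p q = dU q p) ∧
    (∀ p ∈ U, ∀ q ∈ U, ∀ r ∈ U, dU p r ≤ dU p q + dU q r) ∧
    ∀ p ∈ U, ∀ q ∈ U, L.causal p q → T q - T p ≤ dU p q

/-- The set of null lengths of piecewise causal curves from `p` to `q` with respect to a
(generalized) time function `T`: for each partitioned curve whose pieces are future- or
past-directed causal, the value `∑ |T(γ(t (i+1))) - T(γ(t i))|`. -/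
def nullLengths (T : X → ℝ) (p q : X) : Set ℝ :=
  { l | ∃ (γ : ℝ → X) (a b : ℝ) (N : ℕ) (t : Fin (N + 1) → ℝ),
      ContinuousOn γ (Set.Icc a b) ∧ StrictMono t ∧ t 0 = a ∧ t (Fin.last N) = b ∧
      (∀ i : Fin N,
        (∀ ⦃u v : ℝ⦄, t i.castSucc ≤ u → u < v → v ≤ t i.succ → L.causal (γ u) (γ v)) ∨
        (∀ ⦃u v : ℝ⦄, t i.castSucc ≤ u → u < v → v ≤ t i.succ → L.causal (γ v) (γ u))) ∧
      γ a = p ∧ γ b = q ∧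
      l = ∑ i : Fin N, |T (γ (t i.succ)) - T (γ (t i.castSucc))| }

/-- The null distance of Sormani–Vega with respect to `T`. -/
noncomputable def nullDist (T : X → ℝ) (p q : X) : ℝ := sInf (L.nullLengths T p q)

/-- `y` is a τ-midpoint of `x` and `z`. -/
def IsTauMidpoint (x y z : X) : Prop :=
  L.tau x y = L.tau x z / 2 ∧ L.tau y z = L.tau x z / 2

/-- `X` has τ-midpoints. -/
def HasTauMidpoints : Prop :=
  ∀ x z : X, L.timelike x z → ∃ y : X, L.IsTauMidpoint x y z

/-- `y` is an ε-τ-midpoint of `x` and `z`: both `τ(x,y)` and `τ(y,z)` differ from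
`τ(x,z)/2` by less than `ε` (the inequalities `a < b + ε ∧ b < a + ε` encode
`|a - b| < ε` in `[0,∞]`). -/
def IsEpsTauMidpoint (ε : ℝ≥0∞) (x y z : X) : Prop :=
  L.tau x z / 2 < L.tau x y + ε ∧ L.tau x y < L.tau x z / 2 + ε ∧
    L.tau x z / 2 < L.tau y z + ε ∧ L.tau y z < L.tau x z / 2 + ε

/-- `X` has approximate τ-midpoints. -/
def HasApproxTauMidpoints : Prop :=
  ∀ x z : X, L.timelike x z → ∀ ε : ℝ≥0∞, 0 < ε → ∃ y : X, L.IsEpsTauMidpoint ε x y z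

/-- `X` is intrinsic: `τ(x,y)` is the supremum of τ-lengths of future-directed causal
curves from `x` to `y` (with `sup ∅ = 0`). -/
def IsIntrinsic : Prop :=
  ∀ x y : X, L.tau x y =
    ⨆ (γ : ℝ → X) (a : ℝ) (b : ℝ) (_ : L.IsFutureCausalCurve γ a b)
      (_ : γ a = x) (_ : γ b = y), L.tauLength γ a b

/-- `X` is causally geodesic: every timelike related pair is joined by a distance
realizer, and every strictly causally but not timelike related pair is joined by a
future-directed causal curve. -/
def IsCausallyGeodesic : Prop :=
  (∀ x y : X, L.timelike x y →
      ∃ (γ : ℝ → X) (a b : ℝ), L.IsDistanceRealizer γ a b x y) ∧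
    ∀ x y : X, L.CausallyLt x y → ¬L.timelike x y →
      ∃ (γ : ℝ → X) (a b : ℝ), L.IsFutureCausalCurve γ a b ∧ γ a = x ∧ γ b = y

end LorentzianPreLengthSpace

/-! Iterating the midpoint map from `x ≪ y` yields points indexed by the dyadic rationals of
`[0, 1]`. On causally related points the null distance is the difference of the values of `T`, so
the bounds on `T m` say that midpoints contract distances by the factor `1 - c`. Hence the step
curves through the dyadic points converge uniformly to a continuous curve, which is causal because
a pointwise limit of causal maps is locally causal, and local causality propagates along a compact
interval. At dyadic parameters the reverse triangle inequality gives
`(t - s) τ(x, y) ≤ τ(γ s, γ t)`; causal monotonicity extends it to all parameters, and summing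
over a partition gives `τ(x, y) ≤ L_τ(γ)`. -/

lemma sum_fin_succ_sub_castSucc {M : Type*} [AddCommGroup M] {N : ℕ} (f : Fin (N + 1) → M) :
    ∑ i : Fin N, (f i.succ - f i.castSucc) = f (Fin.last N) - f 0 := by
  rw [Finset.sum_sub_distrib, sub_eq_sub_iff_add_eq_add, add_comm, ← Fin.sum_univ_succ,
    Fin.sum_univ_castSucc, add_comm]

/-- A dyadic subdivision scheme: `f n k` is the point with parameter `k / 2 ^ n`, levels are
compatible, and neighbours at level `n` are at distance at most `D * r ^ n`. All `k : ℕ` are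
allowed, so parameters range over `[0, ∞)`. -/
structure IsDyadicSubdivision {X : Type*} [PseudoMetricSpace X] (f : ℕ → ℕ → X) (D r : ℝ) :
    Prop where
  apply_two_mul : ∀ n k, f (n + 1) (2 * k) = f n k
  dist_le : ∀ n k, dist (f n k) (f n (k + 1)) ≤ D * r ^ n

/-- The step curve through the points of level `n` of a dyadic subdivision scheme. -/
noncomputable def dyadicStep {X : Type*} (f : ℕ → ℕ → X) (n : ℕ) (t : ℝ) : X :=
  f n ⌊2 ^ n * t⌋₊

/-- The dyadic points between `x` and `y` obtained by iterating a midpoint map `m`, with parameters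
`k / 2 ^ n`; those with `k ≥ 2 ^ n` are meant to equal `y`. -/
def dyadicMidpoint {X : Type*} (m : X → X → X) (x y : X) : ℕ → ℕ → X
  | 0, k => if k = 0 then x else y
  | n + 1, k =>
    if Even k then dyadicMidpoint m x y n (k / 2)
    else m (dyadicMidpoint m x y n (k / 2)) (dyadicMidpoint m x y n (k / 2 + 1))

namespace IsDyadicSubdivision

open Filter Topology

variable {X : Type*} [PseudoMetricSpace X] {f : ℕ → ℕ → X} {D r : ℝ}

lemma apply_two_pow_mul (hf : IsDyadicSubdivision f D r) (n j k : ℕ) :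
    f (n + j) (2 ^ j * k) = f n k := by
  induction j with
  | zero => simp
  | succ j ih => rw [← ih, ← hf.apply_two_mul (n + j), ← mul_assoc, ← pow_succ', add_assoc]

lemma dyadicStep_div_two_pow (hf : IsDyadicSubdivision f D r) (n j k : ℕ) :
    dyadicStep f (n + j) (k / 2 ^ n) = f n k := by
  have h_index : (2 : ℝ) ^ (n + j) * (k / 2 ^ n) = (2 ^ j * k : ℕ) := by
    push_cast
    field_simp
    ring
  rw [dyadicStep, h_index, Nat.floor_natCast, hf.apply_two_pow_mul]

lemma apply_eq_of_tendsto [T2Space X] (hf : IsDyadicSubdivision f D r) {γ : ℝ → X}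
    (hγ : ∀ t, Tendsto (dyadicStep f · t) atTop (𝓝 (γ t))) (n k : ℕ) :
    γ (k / 2 ^ n) = f n k := by
  refine tendsto_nhds_unique ((tendsto_add_atTop_iff_nat n).2 (hγ _))
    (tendsto_const_nhds.congr fun j ↦ ?_)
  rw [add_comm, hf.dyadicStep_div_two_pow]

lemma bound_nonneg (hf : IsDyadicSubdivision f D r) (n : ℕ) : 0 ≤ D * r ^ n :=
  dist_nonneg.trans (hf.dist_le n 0)

lemma dist_div_two_le (hf : IsDyadicSubdivision f D r) (n k : ℕ) :
    dist (f n (k / 2)) (f (n + 1) k) ≤ D * r ^ (n + 1) := by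
  obtain ⟨j, rfl | rfl⟩ := Nat.even_or_odd' k
  · simpa [hf.apply_two_mul] using hf.bound_nonneg (n + 1)
  · rw [show (2 * j + 1) / 2 = j by lia, ← hf.apply_two_mul]
    exact hf.dist_le _ _

lemma dist_dyadicStep_succ_le (hf : IsDyadicSubdivision f D r) (t : ℝ) (n : ℕ) :
    dist (dyadicStep f n t) (dyadicStep f (n + 1) t) ≤ D * r * r ^ n := by
  have h_floor : ⌊2 ^ n * t⌋₊ = ⌊2 ^ (n + 1) * t⌋₊ / 2 := by
    rw [← Nat.floor_div_ofNat]
    congr 1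
    ring
  rw [dyadicStep, dyadicStep, h_floor, mul_assoc, ← pow_succ']
  exact hf.dist_div_two_le _ _

lemma dist_dyadicStep_le (hf : IsDyadicSubdivision f D r) {n : ℕ} {s t : ℝ}
    (hst : |s - t| < 1 / 2 ^ n) : dist (dyadicStep f n s) (dyadicStep f n t) ≤ D * r ^ n := by
  wlog h_le : s ≤ t generalizing s t
  · rw [dist_comm]
    exact this (by rwa [abs_sub_comm]) (le_of_not_ge h_le)
  have h_mono : ⌊2 ^ n * s⌋₊ ≤ ⌊2 ^ n * t⌋₊ := by gcongr
  have h_lt : ⌊2 ^ n * t⌋₊ < ⌊2 ^ n * s⌋₊ + 2 := by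
    rw [abs_sub_comm, lt_div_iff₀ (by positivity), abs_of_nonneg (sub_nonneg.2 h_le)] at hst
    rw [Nat.floor_lt' (by lia)]
    push_cast
    linarith [Nat.lt_floor_add_one (2 ^ n * s)]
  obtain h | h : ⌊2 ^ n * t⌋₊ = ⌊2 ^ n * s⌋₊ ∨ ⌊2 ^ n * t⌋₊ = ⌊2 ^ n * s⌋₊ + 1 := by lia
  · simpa [dyadicStep, h] using hf.bound_nonneg n
  · simpa [dyadicStep, h] using hf.dist_le n _

lemma exists_tendsto_dyadicStep [CompleteSpace X] (hf : IsDyadicSubdivision f D r) (hr : r < 1) :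
    ∃ γ : ℝ → X, ∀ t, Tendsto (dyadicStep f · t) atTop (𝓝 (γ t)) :=
  Classical.skolem.1 fun t ↦ cauchySeq_tendsto_of_complete
    (cauchySeq_of_le_geometric r (D * r) hr (hf.dist_dyadicStep_succ_le t))

lemma continuous_of_tendsto (hf : IsDyadicSubdivision f D r) (hr : r < 1) {γ : ℝ → X}
    (hγ : ∀ t, Tendsto (dyadicStep f · t) atTop (𝓝 (γ t))) : Continuous γ := by
  set E : ℕ → ℝ := fun n ↦ D * r * r ^ n / (1 - r)
  have h_approx (t : ℝ) (n : ℕ) : dist (dyadicStep f n t) (γ t) ≤ E n :=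
    dist_le_of_le_geometric_of_tendsto r (D * r) hr (hf.dist_dyadicStep_succ_le t) (hγ t) n
  have h_zero : Tendsto (fun n ↦ E n + D * r ^ n + E n) atTop (𝓝 0) := by
    have h_succ : Tendsto (fun n ↦ D * r * r ^ n) atTop (𝓝 0) :=
      (aux_hasSum_of_le_geometric hr (hf.dist_dyadicStep_succ_le 0)).summable.tendsto_atTop_zero
    have h_step : Tendsto (fun n ↦ D * r ^ n) atTop (𝓝 0) :=
      (tendsto_add_atTop_iff_nat 1).1 (by simpa only [pow_succ', mul_assoc] using h_succ)
    have h_E : Tendsto E atTop (𝓝 0) := by simpa only [zero_div] using h_succ.div_const (1 - r)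
    simpa only [add_zero] using (h_E.add h_step).add h_E
  rw [Metric.continuous_iff]
  intro t ε hε
  obtain ⟨n, hn⟩ := (h_zero.eventually_lt_const hε).exists
  refine ⟨1 / 2 ^ n, by positivity, fun s hs ↦ ?_⟩
  calc dist (γ s) (γ t)
      ≤ dist (γ s) (dyadicStep f n s) + dist (dyadicStep f n s) (dyadicStep f n t)
        + dist (dyadicStep f n t) (γ t) := dist_triangle4 _ _ _ _
    _ ≤ E n + D * r ^ n + E n :=
      add_le_add_three (dist_comm (γ s) _ ▸ h_approx s n) (hf.dist_dyadicStep_le hs) (h_approx t n)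
    _ < ε := hn

end IsDyadicSubdivision

section DyadicMidpoint

variable {X : Type*} {m : X → X → X} {x y : X}

lemma dyadicMidpoint_two_mul (n k : ℕ) :
    dyadicMidpoint m x y (n + 1) (2 * k) = dyadicMidpoint m x y n k := by
  simp [dyadicMidpoint]

lemma dyadicMidpoint_two_mul_add_one (n k : ℕ) :
    dyadicMidpoint m x y (n + 1) (2 * k + 1) =
      m (dyadicMidpoint m x y n k) (dyadicMidpoint m x y n (k + 1)) := by
  rw [dyadicMidpoint, if_neg (by simp), show (2 * k + 1) / 2 = k by lia]

lemma dyadicMidpoint_of_two_pow_le (hm : m y y = y) {n k : ℕ} (hk : 2 ^ n ≤ k) :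
    dyadicMidpoint m x y n k = y := by
  induction n generalizing k with
  | zero => rw [dyadicMidpoint, if_neg (by lia)]
  | succ n ih =>
    obtain ⟨j, rfl | rfl⟩ := Nat.even_or_odd' k
    · rw [dyadicMidpoint_two_mul, ih (by lia)]
    · rw [dyadicMidpoint_two_mul_add_one, ih (by lia), ih (by lia), hm]

lemma dyadicMidpoint_rel_succ {P : ℕ → X → X → Prop} (h_zero : P 0 x y)
    (h_succ : ∀ n p q, P n p q → P (n + 1) p (m p q) ∧ P (n + 1) (m p q) q)
    {n k : ℕ} (hk : k < 2 ^ n) :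
    P n (dyadicMidpoint m x y n k) (dyadicMidpoint m x y n (k + 1)) := by
  induction n generalizing k with
  | zero => simpa [dyadicMidpoint, Nat.lt_one_iff.1 hk] using h_zero
  | succ n ih =>
    obtain ⟨j, rfl | rfl⟩ := Nat.even_or_odd' k
    · rw [dyadicMidpoint_two_mul, dyadicMidpoint_two_mul_add_one]
      exact (h_succ n _ _ (ih (by lia))).1
    · rw [show 2 * j + 1 + 1 = 2 * (j + 1) by ring, dyadicMidpoint_two_mul,
        dyadicMidpoint_two_mul_add_one]
      exact (h_succ n _ _ (ih (by lia))).2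

end DyadicMidpoint

namespace LorentzianPreLengthSpace

open Filter Topology

/-- A map into `X` is causally monotone if it carries `≤` to the causal relation. -/
def CausallyMonotone {X ι : Type*} [MetricSpace X] [Preorder ι] (L : LorentzianPreLengthSpace X)
    (γ : ι → X) : Prop :=
  ∀ ⦃s t : ι⦄, s ≤ t → L.causal (γ s) (γ t)

/-- Every timelike related pair has a τ-midpoint at distance from both points at most `r` times
their distance. -/
def HasContractingTauMidpoints {X : Type*} [MetricSpace X] (L : LorentzianPreLengthSpace X)
    (r : ℝ) : Prop :=
  ∀ p q, L.timelike p q →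
    ∃ m, L.IsTauMidpoint p m q ∧ dist p m ≤ r * dist p q ∧ dist m q ≤ r * dist p q

/-- A choice of contracting τ-midpoints for timelike related pairs. The value at `(p, p)` is
prescribed so that the iterated midpoints remain constant beyond the endpoint. -/
structure IsContractingMidpointMap {X : Type*} [MetricSpace X] (L : LorentzianPreLengthSpace X)
    (r : ℝ) (m : X → X → X) : Prop where
  isTauMidpoint : ∀ {p q}, L.timelike p q → L.IsTauMidpoint p (m p q) q
  dist_left_le : ∀ {p q}, L.timelike p q → dist p (m p q) ≤ r * dist p q
  dist_right_le : ∀ {p q}, L.timelike p q → dist (m p q) q ≤ r * dist p q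
  apply_self : ∀ p, m p p = p

variable {X : Type*} [MetricSpace X] {L : LorentzianPreLengthSpace X}

instance : Std.Refl L.causal := ⟨L.causal_refl⟩

instance : IsTrans X L.causal := ⟨fun _ _ _ ↦ L.causal_trans⟩

lemma tau_le_tau {p q r s : X} (hpq : L.causal p q) (hqr : L.causal q r) (hrs : L.causal r s) :
    L.tau q r ≤ L.tau p s :=
  calc L.tau q r ≤ L.tau p q + L.tau q r := le_add_self
    _ ≤ L.tau p r := L.tau_rev_triangle hpq hqr
    _ ≤ L.tau p r + L.tau r s := le_self_add
    _ ≤ L.tau p s := L.tau_rev_triangle (L.causal_trans hpq hqr) hrs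

lemma CausallyMonotone.sum_tau_le_tau {u : ℕ → X} (hu : L.CausallyMonotone u) {i j : ℕ}
    (hij : i ≤ j) : ∑ k ∈ Finset.Ico i j, L.tau (u k) (u (k + 1)) ≤ L.tau (u i) (u j) := by
  induction j, hij using Nat.le_induction with
  | base => simp
  | succ j hij ih =>
    rw [Finset.sum_Ico_succ_top hij]
    exact (add_le_add_left ih _).trans (L.tau_rev_triangle (hu hij) (hu j.le_succ))

lemma tau_self_eq_top_of_timelike {x : X} (hx : L.timelike x x) : L.tau x x = ⊤ := by
  by_contra h_top
  exact (ENNReal.lt_add_right h_top (L.tau_pos_iff_timelike.2 hx).ne').not_ge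
    (L.tau_rev_triangle (L.causal_refl x) (L.causal_refl x))

lemma IsTauMidpoint.timelike {x m y : X} (hm : L.IsTauMidpoint x m y) (hxy : L.timelike x y) :
    L.timelike x m ∧ L.timelike m y := by
  have h_pos : 0 < L.tau x y / 2 := ENNReal.half_pos (L.tau_pos_iff_timelike.2 hxy).ne'
  exact ⟨L.tau_pos_iff_timelike.1 (hm.1 ▸ h_pos), L.tau_pos_iff_timelike.1 (hm.2 ▸ h_pos)⟩

section Curves

variable {γ : ℝ → X} {a b : ℝ}

lemma IsFutureTimelikeCurve.isFutureCausalCurve (hγ : L.IsFutureTimelikeCurve γ a b) :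
    L.IsFutureCausalCurve γ a b :=
  ⟨hγ.1, hγ.2.1, hγ.2.2.1, fun _ _ hs hst ht ↦ L.timelike_causal (hγ.2.2.2 hs hst ht)⟩

lemma IsFutureCausalCurve.causal (hγ : L.IsFutureCausalCurve γ a b) {s t : ℝ} (hs : a ≤ s)
    (hst : s ≤ t) (ht : t ≤ b) : L.causal (γ s) (γ t) := by
  obtain rfl | hst := hst.eq_or_lt
  · exact L.causal_refl _
  · exact hγ.2.2.2 hs hst ht

lemma tauLength_le_tau (hab : a < b) : L.tauLength γ a b ≤ L.tau (γ a) (γ b) := by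
  have h_strictMono : StrictMono ![a, b] := by simpa using hab
  refine iInf₂_le_of_le 1 ![a, b] (iInf_le_of_le h_strictMono ?_)
  exact iInf_le_of_le rfl (iInf_le_of_le rfl (by simp))

lemma le_tauLength_of_mul_le_tau {C : ℝ≥0∞}
    (h : ∀ s t, a ≤ s → s < t → t ≤ b → ENNReal.ofReal (t - s) * C ≤ L.tau (γ s) (γ t)) :
    ENNReal.ofReal (b - a) * C ≤ L.tauLength γ a b := by
  refine le_iInf₂ fun N t ↦ le_iInf fun ht ↦ le_iInf₂ ?_
  rintro rfl rfl
  have h_step (i : Fin N) : t i.castSucc < t i.succ := ht i.castSucc_lt_succ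
  calc ENNReal.ofReal (t (Fin.last N) - t 0) * C
      = ∑ i : Fin N, ENNReal.ofReal (t i.succ - t i.castSucc) * C := by
        rw [← sum_fin_succ_sub_castSucc,
          ENNReal.ofReal_sum_of_nonneg fun i _ ↦ (sub_pos.2 (h_step i)).le, Finset.sum_mul]
    _ ≤ ∑ i : Fin N, L.tau (γ (t i.castSucc)) (γ (t i.succ)) := Finset.sum_le_sum fun i _ ↦
        h _ _ (ht.monotone (Fin.zero_le _)) (h_step i) (ht.monotone (Fin.le_last _))

lemma CausallyPathConnected.exists_isDistanceRealizer_self (h_cpc : L.CausallyPathConnected)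
    {x : X} (hx : L.timelike x x) : ∃ (γ : ℝ → X) (a b : ℝ), L.IsDistanceRealizer γ a b x x := by
  obtain ⟨γ, a, b, hγ, ha, hb⟩ := h_cpc.1 x x hx
  have h_causal := hγ.isFutureCausalCurve
  have hab : 0 < b - a := sub_pos.2 hγ.1
  have h_top : L.tau x x = ⊤ := tau_self_eq_top_of_timelike hx
  refine ⟨γ, a, b, h_causal, ha, hb, le_antisymm ?_ ?_⟩
  · simp [h_top]
  -- Points of a closed causal curve precede and follow `x`, so they are all at infinite `τ`.
  · have h_le := le_tauLength_of_mul_le_tau (L := L) (γ := γ) (a := a) (b := b) (C := ⊤)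
      fun s t hs hst ht ↦ le_top.trans <| h_top.symm.trans_le <| tau_le_tau
        (hb ▸ h_causal.causal hs (hst.le.trans ht) le_rfl) (L.causal_refl x)
        (ha ▸ h_causal.causal le_rfl (hs.trans hst.le) ht)
    rwa [ENNReal.mul_top (by simpa using hab), ← h_top] at h_le

end Curves

section CausalMonotonicity

variable {γ : ℝ → X}

lemma CausallyMonotone.of_locally
    (h : ∀ r, ∃ V ∈ 𝓝 r, ∀ u ∈ V, ∀ v ∈ V, u ≤ v → L.causal (γ u) (γ v)) :
    L.CausallyMonotone γ := by
  intro s t hst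
  choose V hV h_causal using h
  obtain ⟨p, hp_zero, hp_mono, ⟨N, hN⟩, hp_sub⟩ := exists_monotone_Icc_subset_open_cover_Icc hst
    (c := fun r ↦ Subtype.val ⁻¹' interior (V r))
    (fun r ↦ isOpen_interior.preimage continuous_subtype_val)
    (fun u _ ↦ Set.mem_iUnion.2 ⟨u, mem_interior_iff_mem_nhds.2 (hV u)⟩)
  have h_succ (n : ℕ) : L.causal (γ (p n)) (γ (p (n + 1))) := by
    obtain ⟨r, hr⟩ := hp_sub n
    have h_le : p n ≤ p (n + 1) := hp_mono n.le_succ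
    exact h_causal r _ (interior_subset (hr ⟨le_rfl, h_le⟩)) _
      (interior_subset (hr ⟨h_le, le_rfl⟩)) h_le
  have h_chain := Nat.rel_of_forall_rel_succ_of_le L.causal (f := fun n ↦ γ (p n)) h_succ N.zero_le
  simpa only [hp_zero, hN N le_rfl] using h_chain

lemma LocallyCausallyClosed.causallyMonotone_of_tendsto (h_lcc : L.LocallyCausallyClosed)
    {g : ℕ → ℝ → X} (hg : ∀ n, L.CausallyMonotone (g n)) (hγ : Continuous γ)
    (h_lim : ∀ t, Tendsto (g · t) atTop (𝓝 (γ t))) : L.CausallyMonotone γ := by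
  refine .of_locally fun r ↦ ?_
  obtain ⟨U, hU, h_closed⟩ := h_lcc (γ r)
  refine ⟨γ ⁻¹' interior U, hγ.continuousAt (interior_mem_nhds.2 hU), fun u hu v hv huv ↦ ?_⟩
  have h_mem {w : ℝ} (hw : γ w ∈ interior U) : ∀ᶠ n in atTop, g n w ∈ U :=
    h_lim w (mem_interior_iff_mem_nhds.1 hw)
  obtain ⟨N, hN⟩ := eventually_atTop.1 ((h_mem hu).and (h_mem hv))
  exact h_closed _ _ (fun n ↦ g (n + N) u) (fun n ↦ g (n + N) v)
    (fun n ↦ (hN _ (by lia)).1) (fun n ↦ (hN _ (by lia)).2)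
    (subset_closure (interior_subset hu)) (subset_closure (interior_subset hv))
    ((tendsto_add_atTop_iff_nat N).2 (h_lim u)) ((tendsto_add_atTop_iff_nat N).2 (h_lim v))
    (fun n ↦ hg _ huv)

lemma CausallyMonotone.mul_le_tau_of_dyadic (hγ : L.CausallyMonotone γ) {C : ℝ≥0∞}
    (h : ∀ n i j : ℕ, i ≤ j → j ≤ 2 ^ n →
      ENNReal.ofReal (j / 2 ^ n - i / 2 ^ n) * C ≤ L.tau (γ (i / 2 ^ n)) (γ (j / 2 ^ n)))
    {s t : ℝ} (hs : 0 ≤ s) (hst : s < t) (ht : t ≤ 1) :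
    ENNReal.ofReal (t - s) * C ≤ L.tau (γ s) (γ t) := by
  have h_two : Tendsto (fun n : ℕ ↦ (2 : ℝ) ^ n) atTop atTop :=
    tendsto_pow_atTop_atTop_of_one_lt one_lt_two
  have h_lim : Tendsto (fun n : ℕ ↦ ENNReal.ofReal
      (⌊t * 2 ^ n⌋₊ / 2 ^ n - ⌈s * 2 ^ n⌉₊ / 2 ^ n) * C) atTop (𝓝 (ENNReal.ofReal (t - s) * C)) :=
    ENNReal.Tendsto.mul_const (ENNReal.tendsto_ofReal
      (((tendsto_nat_floor_mul_div_atTop (hs.trans hst.le)).comp h_two).sub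
        ((tendsto_nat_ceil_mul_div_atTop hs).comp h_two))) (.inl (by simpa using hst))
  refine le_of_tendsto' h_lim fun n ↦ ?_
  have h_pow : (0 : ℝ) < 2 ^ n := by positivity
  obtain h_le | h_lt := le_or_gt ⌈s * 2 ^ n⌉₊ ⌊t * 2 ^ n⌋₊
  · have h_top : ⌊t * 2 ^ n⌋₊ ≤ 2 ^ n :=
      Nat.floor_le_of_le (by simpa using mul_le_of_le_one_left h_pow.le ht)
    refine (h n _ _ h_le h_top).trans (tau_le_tau (hγ ?_) (hγ ?_) (hγ ?_))
    · exact (le_div_iff₀ h_pow).2 (Nat.le_ceil _)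
    · gcongr
    · exact (div_le_iff₀ h_pow).2 (Nat.floor_le (by have := hs.trans hst.le; positivity))
  · have h_nonpos : (⌊t * 2 ^ n⌋₊ / 2 ^ n - ⌈s * 2 ^ n⌉₊ / 2 ^ n : ℝ) ≤ 0 := by
      rw [sub_nonpos]
      gcongr
    simp [ENNReal.ofReal_of_nonpos h_nonpos]

end CausalMonotonicity

section ContractingMidpoints

variable {r : ℝ} {m : X → X → X} {x y : X}

lemma HasContractingTauMidpoints.exists_midpointMap (h : L.HasContractingTauMidpoints r) :
    ∃ m, L.IsContractingMidpointMap r m := by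
  have h_point (p q : X) : ∃ m, (L.timelike p q →
      L.IsTauMidpoint p m q ∧ dist p m ≤ r * dist p q ∧ dist m q ≤ r * dist p q) ∧
      (p = q → m = p) := by
    by_cases hpq : L.timelike p q
    · obtain ⟨m, hm⟩ := h p q hpq
      refine ⟨m, fun _ ↦ hm, ?_⟩
      rintro rfl
      exact (dist_le_zero.1 (by simpa using hm.2.1)).symm
    · exact ⟨p, fun h' ↦ absurd h' hpq, fun _ ↦ rfl⟩
  choose m hm hm_self using h_point
  exact ⟨m, fun h ↦ (hm _ _ h).1, fun h ↦ (hm _ _ h).2.1, fun h ↦ (hm _ _ h).2.2,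
    fun p ↦ hm_self p p rfl⟩

namespace IsContractingMidpointMap

lemma timelike_dyadicMidpoint (hm : L.IsContractingMidpointMap r m) (hxy : L.timelike x y)
    {n k : ℕ} (hk : k < 2 ^ n) :
    L.timelike (dyadicMidpoint m x y n k) (dyadicMidpoint m x y n (k + 1)) :=
  dyadicMidpoint_rel_succ (P := fun _ ↦ L.timelike) hxy
    (fun _ _ _ hpq ↦ (hm.isTauMidpoint hpq).timelike hpq) hk

lemma tau_dyadicMidpoint (hm : L.IsContractingMidpointMap r m) (hxy : L.timelike x y) {n k : ℕ}
    (hk : k < 2 ^ n) :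
    L.tau (dyadicMidpoint m x y n k) (dyadicMidpoint m x y n (k + 1)) = 2⁻¹ ^ n * L.tau x y := by
  refine (dyadicMidpoint_rel_succ
    (P := fun n p q ↦ L.timelike p q ∧ L.tau p q = 2⁻¹ ^ n * L.tau x y)
    ⟨hxy, by simp⟩ (fun n p q ⟨hpq, h_tau⟩ ↦ ?_) hk).2
  have h_mid := hm.isTauMidpoint hpq
  have h_half : L.tau p q / 2 = 2⁻¹ ^ (n + 1) * L.tau x y := by
    rw [h_tau, div_eq_mul_inv, pow_succ]
    ring
  exact ⟨⟨(h_mid.timelike hpq).1, h_mid.1.trans h_half⟩,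
    (h_mid.timelike hpq).2, h_mid.2.trans h_half⟩

lemma dist_dyadicMidpoint_le (hm : L.IsContractingMidpointMap r m) (hr : 0 ≤ r)
    (hxy : L.timelike x y) {n k : ℕ} (hk : k < 2 ^ n) :
    dist (dyadicMidpoint m x y n k) (dyadicMidpoint m x y n (k + 1)) ≤ dist x y * r ^ n := by
  refine (dyadicMidpoint_rel_succ
    (P := fun n p q ↦ L.timelike p q ∧ dist p q ≤ dist x y * r ^ n)
    ⟨hxy, by simp⟩ (fun n p q ⟨hpq, h_dist⟩ ↦ ?_) hk).2
  have h_mid := hm.isTauMidpoint hpq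
  have h_contract : r * dist p q ≤ dist x y * r ^ (n + 1) :=
    calc r * dist p q ≤ r * (dist x y * r ^ n) := by gcongr
      _ = dist x y * r ^ (n + 1) := by ring
  exact ⟨⟨(h_mid.timelike hpq).1, (hm.dist_left_le hpq).trans h_contract⟩,
    (h_mid.timelike hpq).2, (hm.dist_right_le hpq).trans h_contract⟩

lemma isDyadicSubdivision (hm : L.IsContractingMidpointMap r m) (hr : 0 ≤ r)
    (hxy : L.timelike x y) : IsDyadicSubdivision (dyadicMidpoint m x y) (dist x y) r where
  apply_two_mul := dyadicMidpoint_two_mul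
  dist_le n k := by
    obtain hk | hk := lt_or_ge k (2 ^ n)
    · exact hm.dist_dyadicMidpoint_le hr hxy hk
    · rw [dyadicMidpoint_of_two_pow_le (hm.apply_self y) hk,
        dyadicMidpoint_of_two_pow_le (hm.apply_self y) (hk.trans k.le_succ), dist_self]
      positivity

lemma causallyMonotone_dyadicMidpoint (hm : L.IsContractingMidpointMap r m)
    (hxy : L.timelike x y) (n : ℕ) : L.CausallyMonotone (dyadicMidpoint m x y n) := by
  refine Nat.rel_of_forall_rel_succ_of_le L.causal fun k ↦ ?_
  obtain hk | hk := lt_or_ge k (2 ^ n)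
  · exact L.timelike_causal (hm.timelike_dyadicMidpoint hxy hk)
  · rw [dyadicMidpoint_of_two_pow_le (hm.apply_self y) hk,
      dyadicMidpoint_of_two_pow_le (hm.apply_self y) (hk.trans k.le_succ)]
    exact L.causal_refl y

lemma mul_tau_le_tau_dyadicMidpoint (hm : L.IsContractingMidpointMap r m)
    (hxy : L.timelike x y) {n i j : ℕ} (hij : i ≤ j) (hj : j ≤ 2 ^ n) :
    ENNReal.ofReal (j / 2 ^ n - i / 2 ^ n) * L.tau x y ≤
      L.tau (dyadicMidpoint m x y n i) (dyadicMidpoint m x y n j) := by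
  have h_ofReal : ENNReal.ofReal (j / 2 ^ n - i / 2 ^ n) = (j - i : ℕ) * 2⁻¹ ^ n := by
    rw [← sub_div, ← Nat.cast_sub hij, ENNReal.ofReal_div_of_pos (by positivity),
      ENNReal.ofReal_natCast, ENNReal.ofReal_pow zero_le_two, ENNReal.ofReal_ofNat,
      div_eq_mul_inv, ENNReal.inv_pow]
  calc ENNReal.ofReal (j / 2 ^ n - i / 2 ^ n) * L.tau x y
      = ∑ k ∈ Finset.Ico i j, 2⁻¹ ^ n * L.tau x y := by
        rw [h_ofReal, Finset.sum_const, Nat.card_Ico, nsmul_eq_mul, mul_assoc]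
    _ = ∑ k ∈ Finset.Ico i j, L.tau (dyadicMidpoint m x y n k) (dyadicMidpoint m x y n (k + 1)) :=
        Finset.sum_congr rfl fun k hk ↦
          (hm.tau_dyadicMidpoint hxy ((Finset.mem_Ico.1 hk).2.trans_le hj)).symm
    _ ≤ _ := (hm.causallyMonotone_dyadicMidpoint hxy n).sum_tau_le_tau hij

end IsContractingMidpointMap

lemma HasContractingTauMidpoints.exists_curve [CompleteSpace X]
    (h_mid : L.HasContractingTauMidpoints r) (h_lcc : L.LocallyCausallyClosed) (hr₀ : 0 ≤ r)
    (hr₁ : r < 1) (hxy : L.timelike x y) :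
    ∃ γ : ℝ → X, Continuous γ ∧ L.CausallyMonotone γ ∧ γ 0 = x ∧ γ 1 = y ∧
      ∀ s t, 0 ≤ s → s < t → t ≤ 1 →
        ENNReal.ofReal (t - s) * L.tau x y ≤ L.tau (γ s) (γ t) := by
  obtain ⟨m, hm⟩ := h_mid.exists_midpointMap
  have h_sub := hm.isDyadicSubdivision hr₀ hxy
  obtain ⟨γ, h_lim⟩ := h_sub.exists_tendsto_dyadicStep hr₁
  have h_dyadic (n k : ℕ) : γ (k / 2 ^ n) = dyadicMidpoint m x y n k :=
    h_sub.apply_eq_of_tendsto h_lim n k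
  have hγ : Continuous γ := h_sub.continuous_of_tendsto hr₁ h_lim
  have h_mono : L.CausallyMonotone γ := h_lcc.causallyMonotone_of_tendsto
    (fun n s t hst ↦ hm.causallyMonotone_dyadicMidpoint hxy n (by gcongr)) hγ h_lim
  refine ⟨γ, hγ, h_mono, by simpa [dyadicMidpoint] using h_dyadic 0 0,
    by simpa [dyadicMidpoint] using h_dyadic 0 1,
    fun s t ↦ h_mono.mul_le_tau_of_dyadic fun n i j hij hj ↦ ?_⟩
  rw [h_dyadic, h_dyadic]
  exact hm.mul_tau_le_tau_dyadicMidpoint hxy hij hj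

lemma HasContractingTauMidpoints.exists_isDistanceRealizer [CompleteSpace X]
    (h_mid : L.HasContractingTauMidpoints r) (h_lcc : L.LocallyCausallyClosed) (hr₀ : 0 ≤ r)
    (hr₁ : r < 1) (hxy : L.timelike x y) (h_ne : x ≠ y) :
    ∃ γ : ℝ → X, L.IsDistanceRealizer γ 0 1 x y := by
  obtain ⟨γ, hγ, h_mono, rfl, rfl, h_tau⟩ := h_mid.exists_curve h_lcc hr₀ hr₁ hxy
  refine ⟨γ, ⟨one_pos, hγ.continuousOn, ⟨0, by simp, 1, by simp, h_ne⟩,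
    fun s t _ hst _ ↦ h_mono hst.le⟩, rfl, rfl, le_antisymm (tauLength_le_tau one_pos) ?_⟩
  simpa using le_tauLength_of_mul_le_tau h_tau

end ContractingMidpoints

section NullDistance

variable {T : X → ℝ} {p q : X}

lemma IsTimeFunction.le_of_causal (hT : L.IsTimeFunction T) (hpq : L.causal p q) : T p ≤ T q := by
  obtain rfl | h_ne := eq_or_ne p q
  · rfl
  · exact (hT.2 p q ⟨hpq, h_ne⟩).le

lemma abs_sub_le_of_mem_nullLengths {l : ℝ} (hl : l ∈ L.nullLengths T p q) : |T q - T p| ≤ l := by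
  obtain ⟨γ, _, _, N, t, -, -, rfl, rfl, -, rfl, rfl, rfl⟩ := hl
  rw [← sum_fin_succ_sub_castSucc fun i ↦ T (γ (t i))]
  exact Finset.abs_sum_le_sum_abs _ _

lemma IsFutureCausalCurve.abs_sub_mem_nullLengths {γ : ℝ → X} {a b : ℝ}
    (hγ : L.IsFutureCausalCurve γ a b) : |T (γ b) - T (γ a)| ∈ L.nullLengths T (γ a) (γ b) := by
  refine ⟨γ, a, b, 1, ![a, b], hγ.2.1, by simpa using hγ.1, rfl, rfl, fun i ↦ .inl ?_, rfl, rfl,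
    by simp⟩
  intro u v hu huv hv
  fin_cases i
  exact hγ.2.2.2 hu huv hv

lemma CausallyPathConnected.abs_sub_mem_nullLengths (h_cpc : L.CausallyPathConnected)
    (hpq : L.causal p q) : |T q - T p| ∈ L.nullLengths T p q := by
  obtain rfl | h_ne := eq_or_ne p q
  · exact ⟨fun _ ↦ p, 0, 0, 0, fun _ ↦ 0, continuousOn_const,
      Subsingleton.strictMono (α := Fin 1) _, rfl, rfl, Fin.elim0, rfl, rfl, by simp⟩
  · obtain ⟨γ, a, b, hγ, rfl, rfl⟩ := h_cpc.2 p q ⟨hpq, h_ne⟩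
    exact hγ.abs_sub_mem_nullLengths

lemma CausallyPathConnected.nullDist_eq_abs_sub (h_cpc : L.CausallyPathConnected)
    (hpq : L.causal p q) : L.nullDist T p q = |T q - T p| :=
  IsLeast.csInf_eq ⟨h_cpc.abs_sub_mem_nullLengths hpq, fun _ ↦ abs_sub_le_of_mem_nullLengths⟩

lemma hasContractingTauMidpoints_of_time_bounds {c : ℝ}
    (h_dist : ∀ p q, L.causal p q → dist p q = T q - T p)
    (h_mid : ∀ p q, L.timelike p q → ∃ m, L.IsTauMidpoint p m q ∧
      (1 - c) * T p + c * T q ≤ T m ∧ T m ≤ c * T p + (1 - c) * T q) :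
    L.HasContractingTauMidpoints (1 - c) := by
  intro p q hpq
  obtain ⟨m, hm, h_lower, h_upper⟩ := h_mid p q hpq
  obtain ⟨hpm, hmq⟩ := hm.timelike hpq
  refine ⟨m, hm, ?_, ?_⟩
  · rw [h_dist p m (L.timelike_causal hpm), h_dist p q (L.timelike_causal hpq)]
    linarith
  · rw [h_dist m q (L.timelike_causal hmq), h_dist p q (L.timelike_causal hpq)]
    linarith

end NullDistance

end LorentzianPreLengthSpace

theorem tau_midpoints_imply_causally_geodesic_general
    {X : Type*} [MetricSpace X] [CompleteSpace X] {L : LorentzianPreLengthSpace X} {r : ℝ}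
    (h_lcc : L.LocallyCausallyClosed) (h_cpc : L.CausallyPathConnected)
    (hr₀ : 0 ≤ r) (hr₁ : r < 1) (h_mid : L.HasContractingTauMidpoints r) :
    L.IsCausallyGeodesic := by
  refine ⟨fun x y hxy ↦ ?_, fun x y hxy _ ↦ h_cpc.2 x y hxy⟩
  obtain rfl | h_ne := eq_or_ne x y
  · exact h_cpc.exists_isDistanceRealizer_self hxy
  · obtain ⟨γ, hγ⟩ := h_mid.exists_isDistanceRealizer h_lcc hr₀ hr₁ hxy h_ne
    exact ⟨γ, 0, 1, hγ⟩

/-- **τ-midpoints imply being causally geodesic.**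
Let `X` be a locally causally closed and sufficiently causally connected Lorentzian
pre-length space, `T` a locally anti-Lipschitz time function, suppose the background
metric is the null distance `d_T` and `(X, d_T)` is complete. If `X` has τ-midpoints and
there is `c ∈ (0, 1/2]` such that every `p ≪ q` admits a τ-midpoint `m` with
`(1-c)·T p + c·T q ≤ T m ≤ c·T p + (1-c)·T q`, then `X` is causally geodesic. -/
theorem tau_midpoints_imply_causally_geodesic
    {X : Type*} [MetricSpace X] [CompleteSpace X]
    (L : LorentzianPreLengthSpace X) (T : X → ℝ)
    (h_lcc : L.LocallyCausallyClosed)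
    (h_scc : L.SufficientlyCausallyConnected)
    (hT : L.IsTimeFunction T)
    (hT_aL : L.IsLocallyAntiLipschitz T)
    (h_bg : ∀ p q : X, dist p q = L.nullDist T p q)
    (h_mid : L.HasTauMidpoints)
    (c : ℝ) (hc0 : 0 < c) (hc2 : c ≤ 1 / 2)
    (h_comp : ∀ p q : X, L.timelike p q → ∃ m : X, L.IsTauMidpoint p m q ∧
      (1 - c) * T p + c * T q ≤ T m ∧ T m ≤ c * T p + (1 - c) * T q) :
    L.IsCausallyGeodesic := by
  have h_cpc : L.CausallyPathConnected := h_scc.2.1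
  have h_dist (p q : X) (hpq : L.causal p q) : dist p q = T q - T p := by
    rw [h_bg, h_cpc.nullDist_eq_abs_sub hpq, abs_of_nonneg (sub_nonneg.2 (hT.le_of_causal hpq))]
  exact tau_midpoints_imply_causally_geodesic_general h_lcc h_cpc (by linarith) (by linarith)
    (LorentzianPreLengthSpace.hasContractingTauMidpoints_of_time_bounds h_dist h_comp)
end

section
/- Let X be a chronological Lorentzian pre-length space such that τ is continuous on a neighbourhood of the diagonal {(x,x) : x ∈ X} in X × X. If X is geodesic, i.e., for every pair x ≪ y there exists a distance realizer from x to y, then X has τ-midpoints: for every pair x ≪ z there exists y ∈ X with τ(x,y) = ½τ(x,z) = τ(y,z). -/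
open scoped ENNReal

/-!
Along a distance realizer `γ` from `x` to `z` with `τ(x, z) < ∞` the reverse triangle inequality is
an equality: `τ(x, γ s) + τ(γ s, γ t) = τ(x, γ t)` for `s ≤ t`. In particular `τ(γ t, γ t) = 0`, so
continuity of `τ` at the diagonal makes `t ↦ τ(x, γ t)` continuous, and by the intermediate value
theorem it equals half of `τ(x, z)` at some point.

If `τ(y, y)` is finite for all `y` on `γ`, continuity at the diagonal and compactness bound the
`τ`-length, hence `τ(x, z)`, by a finite sum. A point `y` on `γ` with `τ(y, y) = ∞`, on the other
hand, is itself a midpoint, because then `τ(x, y) = τ(y, z) = τ(x, z) = ∞`.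
-/

open Set Filter Topology

theorem exists_strictMono_fin_sum_le {α M : Type*} [PartialOrder α] [AddCommMonoid M]
    [PartialOrder M] [CanonicallyOrderedAdd M] [IsOrderedAddMonoid M] (F : α → α → M) {u : ℕ → α}
    (hu : Monotone u) (n : ℕ) :
    ∃ (N : ℕ) (t : Fin (N + 1) → α), StrictMono t ∧ t 0 = u 0 ∧ t (Fin.last N) = u n ∧
      ∑ i : Fin N, F (t i.castSucc) (t i.succ) ≤ ∑ i ∈ Finset.range n, F (u i) (u (i + 1)) := by
  induction n with
  | zero => exact ⟨0, fun _ => u 0, Subsingleton.strictMono (α := Fin 1) _, rfl, rfl, by simp⟩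
  | succ n ih =>
    obtain ⟨N, t, ht, ht0, htN, hsum⟩ := ih
    rw [Finset.sum_range_succ]
    rcases (hu n.le_succ).eq_or_lt with heq | hlt
    · exact ⟨N, t, ht, ht0, htN.trans heq, hsum.trans le_self_add⟩
    · refine ⟨N + 1, Fin.snoc (α := fun _ => α) t (u (n + 1)), ?_, ?_, Fin.snoc_last _ _, ?_⟩
      · refine Fin.strictMono_iff_lt_succ.2 (Fin.lastCases ?_ fun i => ?_)
        · simpa [htN] using hlt
        · simpa only [Fin.snoc_castSucc, ← Fin.castSucc_succ] using ht i.castSucc_lt_succ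
      · simpa only [← Fin.castSucc_zero, Fin.snoc_castSucc] using ht0
      · rw [Fin.sum_univ_castSucc]
        simp only [Fin.snoc_castSucc, ← Fin.castSucc_succ, Fin.succ_last, Fin.snoc_last, htN]
        gcongr

namespace LorentzianPreLengthSpace

variable {X : Type*} [MetricSpace X] {L : LorentzianPreLengthSpace X} {γ : ℝ → X} {a b : ℝ}
  {x y z : X}

theorem isTauMidpoint_of_tau_self_eq_top (hxy : L.causal x y) (hyz : L.causal y z)
    (hy : L.tau y y = ⊤) : L.IsTauMidpoint x y z := by
  have hτxy : L.tau x y = ⊤ := by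
    simpa [hy] using L.tau_rev_triangle hxy (L.causal_refl y)
  have hτyz : L.tau y z = ⊤ := by
    simpa [hy] using L.tau_rev_triangle (L.causal_refl y) hyz
  have hτxz : L.tau x z = ⊤ := by
    simpa [hτxy] using L.tau_rev_triangle hxy hyz
  simp [IsTauMidpoint, hτxy, hτyz, hτxz, ENNReal.top_div_of_ne_top]

theorem tauLength_le_sum_range {u : ℕ → ℝ} (hu : Monotone u) {n : ℕ} (h0 : u 0 = a)
    (hn : u n = b) :
    L.tauLength γ a b ≤ ∑ i ∈ Finset.range n, L.tau (γ (u i)) (γ (u (i + 1))) := by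
  obtain ⟨N, t, ht, ht0, htN, hsum⟩ :=
    exists_strictMono_fin_sum_le (fun s t => L.tau (γ s) (γ t)) hu n
  exact (iInf₂_le_of_le N t <| iInf₂_le_of_le ht (ht0.trans h0) <| iInf_le _ (htN.trans hn)).trans
    hsum

theorem tauLength_le_tau_add_tau_add_tau {s t : ℝ} (has : a ≤ s) (hst : s ≤ t) (htb : t ≤ b) :
    L.tauLength γ a b ≤ L.tau (γ a) (γ s) + L.tau (γ s) (γ t) + L.tau (γ t) (γ b) := by
  let u : ℕ → ℝ := fun | 0 => a | 1 => s | 2 => t | _ => b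
  have hu : Monotone u := monotone_nat_of_le_succ fun
    | 0 => has
    | 1 => hst
    | 2 => htb
    | _ + 3 => le_rfl
  simpa [Finset.sum_range_succ, u] using
    tauLength_le_sum_range (L := L) (γ := γ) hu (n := 3) rfl rfl

theorem tauLength_ne_top (hab : a ≤ b) (hγ : ContinuousOn γ (Icc a b))
    (hτ : ∀ t ∈ Icc a b, ContinuousAt (fun p : X × X => L.tau p.1 p.2) (γ t, γ t))
    (hself : ∀ t ∈ Icc a b, L.tau (γ t) (γ t) ≠ ⊤) : L.tauLength γ a b ≠ ⊤ := by
  have hlocal (r : Icc a b) :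
      ∃ V : Set (Icc a b), IsOpen V ∧ r ∈ V ∧ ∀ s ∈ V, ∀ t ∈ V, L.tau (γ s) (γ t) < ⊤ := by
    have hr : Tendsto (fun s : Icc a b => γ s) (𝓝 r) (𝓝 (γ r)) := hγ.domRestrict.tendsto r
    have hlt : ∀ᶠ p in 𝓝 r ×ˢ 𝓝 r, L.tau (γ p.1) (γ p.2) < ⊤ :=
      ((hτ r r.2).tendsto.comp ((hr.prodMap hr).trans_eq (nhds_prod_eq).symm)).eventually_lt_const
        (hself r r.2).lt_top
    obtain ⟨W, hW, hWlt⟩ := eventually_prod_self_iff'.1 hlt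
    obtain ⟨V, hVW, hV, hrV⟩ := mem_nhds_iff.1 hW
    exact ⟨V, hV, hrV, fun s hs t ht => hWlt s (hVW hs) t (hVW ht)⟩
  choose V hVopen hmemV hVlt using hlocal
  obtain ⟨u, hu0, hu, ⟨n, hun⟩, hsub⟩ := exists_monotone_Icc_subset_open_cover_Icc hab hVopen
    fun r _ => mem_iUnion.2 ⟨r, hmemV r⟩
  refine ne_top_of_le_ne_top (ENNReal.sum_ne_top.2 fun i _ => ?_)
    (tauLength_le_sum_range (u := fun i => u i) hu hu0 (hun n le_rfl))
  obtain ⟨r, hr⟩ := hsub i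
  have hi : u i ≤ u (i + 1) := hu i.le_succ
  exact (hVlt r _ (hr (left_mem_Icc.2 hi)) _ (hr (right_mem_Icc.2 hi))).ne

theorem IsFutureCausalCurve.causal_of_le (hγ : L.IsFutureCausalCurve γ a b) {s t : ℝ}
    (has : a ≤ s) (hst : s ≤ t) (htb : t ≤ b) : L.causal (γ s) (γ t) := by
  obtain ⟨-, -, -, hcausal⟩ := hγ
  rcases hst.eq_or_lt with rfl | hlt
  · exact L.causal_refl _
  · exact hcausal has hlt htb

namespace IsDistanceRealizer

variable (hγ : L.IsDistanceRealizer γ a b x z)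
include hγ

theorem causal_left {t : ℝ} (ht : t ∈ Icc a b) : L.causal x (γ t) := by
  obtain ⟨hcurve, rfl, -⟩ := hγ
  exact hcurve.causal_of_le le_rfl ht.1 ht.2

theorem causal_right {t : ℝ} (ht : t ∈ Icc a b) : L.causal (γ t) z := by
  obtain ⟨hcurve, -, rfl, -⟩ := hγ
  exact hcurve.causal_of_le ht.1 ht.2 le_rfl

theorem tau_add_tau (hfin : L.tau x z ≠ ⊤) {s t : ℝ} (has : a ≤ s) (hst : s ≤ t) (htb : t ≤ b) :
    L.tau x (γ s) + L.tau (γ s) (γ t) = L.tau x (γ t) := by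
  have hs : s ∈ Icc a b := ⟨has, hst.trans htb⟩
  have ht : t ∈ Icc a b := ⟨has.trans hst, htb⟩
  have hxtz : L.tau x (γ t) + L.tau (γ t) z ≤ L.tau x z :=
    L.tau_rev_triangle (hγ.causal_left ht) (hγ.causal_right ht)
  have htz : L.tau (γ t) z ≠ ⊤ := ne_top_of_le_ne_top hfin (le_add_self.trans hxtz)
  refine le_antisymm
    (L.tau_rev_triangle (hγ.causal_left hs) (hγ.1.causal_of_le has hst htb)) ?_
  rw [← ENNReal.add_le_add_iff_right htz]
  obtain ⟨-, rfl, rfl, hlength⟩ := hγ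
  calc L.tau (γ a) (γ t) + L.tau (γ t) (γ b)
      ≤ L.tauLength γ a b := hlength ▸ hxtz
    _ ≤ L.tau (γ a) (γ s) + L.tau (γ s) (γ t) + L.tau (γ t) (γ b) :=
      tauLength_le_tau_add_tau_add_tau has hst htb

theorem tau_add_tau_right (hfin : L.tau x z ≠ ⊤) {t : ℝ} (ht : t ∈ Icc a b) :
    L.tau x (γ t) + L.tau (γ t) z = L.tau x z := by
  simpa only [hγ.2.2.1] using hγ.tau_add_tau hfin ht.1 ht.2 le_rfl

theorem tau_self_eq_zero (hfin : L.tau x z ≠ ⊤) {t : ℝ} (ht : t ∈ Icc a b) :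
    L.tau (γ t) (γ t) = 0 := by
  have hxt : L.tau x (γ t) ≠ ⊤ :=
    ne_top_of_le_ne_top hfin (hγ.tau_add_tau_right hfin ht ▸ le_self_add)
  rw [← ENNReal.add_right_inj hxt, add_zero]
  exact hγ.tau_add_tau hfin ht.1 le_rfl ht.2

theorem tau_le_tau_add_tau (hfin : L.tau x z ≠ ⊤) {s t : ℝ} (hs : s ∈ Icc a b)
    (ht : t ∈ Icc a b) : L.tau x (γ t) ≤ L.tau x (γ s) + L.tau (γ s) (γ t) := by
  rcases le_total s t with hst | hts
  · exact (hγ.tau_add_tau hfin hs.1 hst ht.2).ge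
  · calc L.tau x (γ t) ≤ L.tau x (γ t) + L.tau (γ t) (γ s) := le_self_add
      _ = L.tau x (γ s) := hγ.tau_add_tau hfin ht.1 hts hs.2
      _ ≤ L.tau x (γ s) + L.tau (γ s) (γ t) := le_self_add

theorem continuousOn_tau (hfin : L.tau x z ≠ ⊤)
    (hτ : ∀ t ∈ Icc a b, ContinuousAt (fun p : X × X => L.tau p.1 p.2) (γ t, γ t)) :
    ContinuousOn (fun t => L.tau x (γ t)) (Icc a b) := by
  have hcont : ContinuousOn γ (Icc a b) := hγ.1.2.1
  refine continuousOn_iff_lower_upperSemicontinuousOn.2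
    ⟨(L.tau_lsc.lowerSemicontinuousOn univ).comp (continuousOn_const.prodMk hcont)
      (mapsTo_univ _ _), fun s hs c hc => ?_⟩
  have hlim : Tendsto (fun t => L.tau x (γ s) + L.tau (γ s) (γ t)) (𝓝[Icc a b] s)
      (𝓝 (L.tau x (γ s))) := by
    have hpair : Tendsto (fun t => (γ s, γ t)) (𝓝[Icc a b] s) (𝓝 (γ s, γ s)) :=
      tendsto_const_nhds.prodMk_nhds (hcont s hs)
    simpa only [hγ.tau_self_eq_zero hfin hs, add_zero, Function.comp_def] using
      ((hτ s hs).tendsto.comp hpair).const_add (L.tau x (γ s))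
  filter_upwards [hlim.eventually_lt_const hc, self_mem_nhdsWithin] with t htc ht
  exact (hγ.tau_le_tau_add_tau hfin hs ht).trans_lt htc

theorem isTauMidpoint_of_tau_eq_half (hfin : L.tau x z ≠ ⊤) {t : ℝ} (ht : t ∈ Icc a b)
    (hhalf : L.tau x (γ t) = L.tau x z / 2) : L.IsTauMidpoint x (γ t) z := by
  refine ⟨hhalf, ?_⟩
  have hhalf_ne_top : L.tau x z / 2 ≠ ⊤ := ENNReal.div_ne_top hfin two_ne_zero
  rw [← ENNReal.add_right_inj hhalf_ne_top, ENNReal.add_halves, ← hhalf,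
    hγ.tau_add_tau_right hfin ht]

theorem exists_isTauMidpoint
    (hτ : ∀ t ∈ Icc a b, ContinuousAt (fun p : X × X => L.tau p.1 p.2) (γ t, γ t)) :
    ∃ t ∈ Icc a b, L.IsTauMidpoint x (γ t) z := by
  by_cases htop : ∃ t ∈ Icc a b, L.tau (γ t) (γ t) = ⊤
  · obtain ⟨t, ht, ht_top⟩ := htop
    exact ⟨t, ht, isTauMidpoint_of_tau_self_eq_top (hγ.causal_left ht) (hγ.causal_right ht) ht_top⟩
  push Not at htop
  obtain ⟨⟨hab, hcont, -, -⟩, ha, hb, hlength⟩ := id hγ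
  have hfin : L.tau x z ≠ ⊤ := hlength ▸ tauLength_ne_top hab.le hcont hτ htop
  have hivt := intermediate_value_Icc hab.le (hγ.continuousOn_tau hfin hτ)
  have hhalf : L.tau x z / 2 ∈ Icc (L.tau x (γ a)) (L.tau x (γ b)) := by
    rw [← ha, hγ.tau_self_eq_zero hfin (left_mem_Icc.2 hab.le), ha, hb]
    exact ⟨zero_le, ENNReal.half_le_self⟩
  obtain ⟨t, ht, ht_half⟩ := hivt hhalf
  exact ⟨t, ht, hγ.isTauMidpoint_of_tau_eq_half hfin ht ht_half⟩

end IsDistanceRealizer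
end LorentzianPreLengthSpace

theorem geodesic_implies_tau_midpoints_general
    {X : Type*} [MetricSpace X] (L : LorentzianPreLengthSpace X)
    (h_cont : ∀ x : X, ContinuousAt (fun p : X × X => L.tau p.1 p.2) (x, x))
    (h_geo : ∀ x y : X, L.timelike x y →
      ∃ (γ : ℝ → X) (a b : ℝ), L.IsDistanceRealizer γ a b x y) :
    L.HasTauMidpoints := by
  intro x z hxz
  obtain ⟨γ, a, b, hγ⟩ := h_geo x z hxz
  obtain ⟨t, -, ht⟩ := hγ.exists_isTauMidpoint fun t _ => h_cont (γ t)
  exact ⟨γ t, ht⟩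

/-- **Geodesic implies τ-midpoints.**
Let `X` be a chronological Lorentzian pre-length space with `τ` continuous on a
neighbourhood of the diagonal. If every timelike related pair is joined by a distance
realizer, then `X` has τ-midpoints. -/
theorem geodesic_implies_tau_midpoints
    {X : Type*} [MetricSpace X] (L : LorentzianPreLengthSpace X)
    (h_chron : ∀ x : X, L.tau x x = 0)
    (h_cont : ∃ U : Set (X × X), IsOpen U ∧ Set.diagonal X ⊆ U ∧
      ContinuousOn (fun p : X × X => L.tau p.1 p.2) U)
    (h_geo : ∀ x y : X, L.timelike x y →
      ∃ (γ : ℝ → X) (a b : ℝ), L.IsDistanceRealizer γ a b x y) :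
    L.HasTauMidpoints := by
  obtain ⟨U, hU, hdiag, hτU⟩ := h_cont
  exact geodesic_implies_tau_midpoints_general L
    (fun _ => hτU.continuousAt (hU.mem_nhds (hdiag rfl))) h_geo
end

section
/- Let (X, d) be a metric space, let c ∈ (0, 1/2], M ≥ 0, and set α = −log₂(1−c). Let γ be a map from the dyadic rationals in [0,1] to X such that d(γ(k/2ⁿ), γ((k+1)/2ⁿ)) ≤ (1−c)ⁿ·M for every n ∈ ℕ and every integer 0 ≤ k < 2ⁿ. Then γ is α-Hölder with constant 2M/c, i.e., d(γ(s), γ(t)) ≤ (2M/c)·|s − t|^α for all dyadic rationals s, t ∈ [0,1]. -/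
/-- `r` is a dyadic rational in `[0,1]`, i.e. of the form `k / 2^n` with `0 ≤ k ≤ 2^n`. -/
def IsDyadic01 (r : ℝ) : Prop := ∃ (n k : ℕ), k ≤ 2 ^ n ∧ r = (k : ℝ) / 2 ^ n

/-!
Let `s < t` be multiples of `2⁻ᴺ`. Move `s` up and `t` down to the nearest multiples of `2⁻⁽ᴺ⁻¹⁾`,
at the cost of at most one step of level `N` on each side, and repeat. Stop at the level `n` where
rounding once more would make the two points meet or cross: there they are at most two steps apart.
Rounding inward only shrinks the interval, so `2⁻ⁿ ≤ t - s`, while the total cost is at most twice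
the sum of the step bounds from level `n` to `N`. For steps bounded by `r ^ n * M` this is at most
`2 * M / (1 - r) * r ^ n`, and `r ^ n = (2⁻ⁿ) ^ α` for `α = -log₂ r`.
-/

/-- The dyadic rational `k / 2ⁿ`, presented by its level `n` and its numerator `k`. -/
noncomputable def dyadicPoint (n k : ℕ) : ℝ := k / 2 ^ n

theorem dyadicPoint_add_mul_two_pow (n m k : ℕ) :
    dyadicPoint (n + m) (k * 2 ^ m) = dyadicPoint n k := by
  simp only [dyadicPoint, Nat.cast_mul, Nat.cast_pow, Nat.cast_ofNat, pow_add]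
  exact mul_div_mul_right _ _ (by positivity)

theorem dyadicPoint_succ_two_mul (n k : ℕ) : dyadicPoint (n + 1) (2 * k) = dyadicPoint n k := by
  simpa only [pow_one, mul_comm] using dyadicPoint_add_mul_two_pow n 1 k

theorem dyadicPoint_strictMono (n : ℕ) : StrictMono (dyadicPoint n) := fun k l hkl => by
  unfold dyadicPoint
  gcongr

theorem inv_two_pow_le_dyadicPoint_sub {n k l : ℕ} (hkl : k < l) :
    ((2 : ℝ) ^ n)⁻¹ ≤ dyadicPoint n l - dyadicPoint n k := by
  have hgap : (k : ℝ) + 1 ≤ l := mod_cast hkl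
  rw [dyadicPoint, dyadicPoint, ← sub_div, inv_eq_one_div]
  gcongr
  linarith

theorem IsDyadic01.exists_common_level {s t : ℝ} (hs : IsDyadic01 s) (ht : IsDyadic01 t) :
    ∃ N a b : ℕ, a ≤ 2 ^ N ∧ b ≤ 2 ^ N ∧ s = dyadicPoint N a ∧ t = dyadicPoint N b := by
  obtain ⟨n, k, hk, rfl⟩ := hs
  obtain ⟨m, l, hl, rfl⟩ := ht
  refine ⟨n + m, k * 2 ^ m, l * 2 ^ n, ?_, ?_, (dyadicPoint_add_mul_two_pow n m k).symm, ?_⟩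
  · rw [pow_add]
    gcongr
  · rw [add_comm, pow_add]
    gcongr
  · rw [add_comm]
    exact (dyadicPoint_add_mul_two_pow m n l).symm

theorem inv_pow_rpow_neg_logb {b r : ℝ} (hb : 1 < b) (hr : 0 < r) (n : ℕ) :
    (b ^ n)⁻¹ ^ (-Real.logb b r) = r ^ n := by
  have hb₀ : 0 < b := one_pos.trans hb
  rw [Real.inv_rpow (by positivity), Real.rpow_neg (by positivity), inv_inv,
    ← Real.rpow_pow_comm hb₀.le, Real.rpow_logb hb₀ hb.ne' hr]

/-- `f` moves by at most `δ n` between consecutive dyadic rationals of level `n` in `[0, 1]`: the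
hypothesis of the chaining argument, for an arbitrary sequence `δ` of step bounds. -/
def DyadicStepBound {X : Type*} [PseudoMetricSpace X] (f : ℝ → X) (δ : ℕ → ℝ) : Prop :=
  ∀ n k : ℕ, k < 2 ^ n → dist (f (dyadicPoint n k)) (f (dyadicPoint n (k + 1))) ≤ δ n

namespace DyadicStepBound

variable {X : Type*} [PseudoMetricSpace X] {f : ℝ → X} {δ : ℕ → ℝ}

theorem nonneg (h : DyadicStepBound f δ) (n : ℕ) : 0 ≤ δ n :=
  dist_nonneg.trans (h n 0 (by positivity))

theorem dist_le_of_le_succ (h : DyadicStepBound f δ) {n k l : ℕ} (hkl : k ≤ l) (hlk : l ≤ k + 1)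
    (hl : l ≤ 2 ^ n) : dist (f (dyadicPoint n k)) (f (dyadicPoint n l)) ≤ δ n := by
  obtain rfl | rfl : l = k ∨ l = k + 1 := by omega
  · simpa only [dist_self] using h.nonneg n
  · exact h n k hl

theorem dist_le_two_mul_of_le_add_two (h : DyadicStepBound f δ) {n k l : ℕ} (hkl : k < l)
    (hlk : l ≤ k + 2) (hl : l ≤ 2 ^ n) :
    dist (f (dyadicPoint n k)) (f (dyadicPoint n l)) ≤ 2 * δ n :=
  calc dist (f (dyadicPoint n k)) (f (dyadicPoint n l))
      ≤ dist (f (dyadicPoint n k)) (f (dyadicPoint n (k + 1)))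
        + dist (f (dyadicPoint n (k + 1))) (f (dyadicPoint n l)) := dist_triangle _ _ _
    _ ≤ δ n + δ n := add_le_add (h n k (by omega)) (h.dist_le_of_le_succ hkl hlk hl)
    _ = 2 * δ n := (two_mul _).symm

theorem dist_roundInward_le (h : DyadicStepBound f δ) {n a b : ℕ} (hab : a ≤ b)
    (hb : b ≤ 2 ^ (n + 1)) :
    dist (f (dyadicPoint (n + 1) a)) (f (dyadicPoint (n + 1) b)) ≤
      dist (f (dyadicPoint n ((a + 1) / 2))) (f (dyadicPoint n (b / 2))) + 2 * δ (n + 1) := by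
  simp only [← dyadicPoint_succ_two_mul n]
  have hup := h.dist_le_of_le_succ (n := n + 1) (k := a) (l := 2 * ((a + 1) / 2))
    (by omega) (by omega) (by omega)
  have hdown := h.dist_le_of_le_succ (n := n + 1) (k := 2 * (b / 2)) (l := b)
    (by omega) (by omega) hb
  linarith [dist_triangle4 (f (dyadicPoint (n + 1) a))
    (f (dyadicPoint (n + 1) (2 * ((a + 1) / 2)))) (f (dyadicPoint (n + 1) (2 * (b / 2))))
    (f (dyadicPoint (n + 1) b))]

theorem exists_dist_le_two_mul_sum (h : DyadicStepBound f δ) (N : ℕ) {a b : ℕ} (hab : a < b)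
    (hb : b ≤ 2 ^ N) :
    ∃ n ≤ N, ((2 : ℝ) ^ n)⁻¹ ≤ dyadicPoint N b - dyadicPoint N a ∧
      dist (f (dyadicPoint N a)) (f (dyadicPoint N b)) ≤ 2 * ∑ k ∈ Finset.Ico n (N + 1), δ k := by
  induction N generalizing a b with
  | zero =>
    refine ⟨0, le_rfl, inv_two_pow_le_dyadicPoint_sub hab, ?_⟩
    simpa using h.dist_le_two_mul_of_le_add_two hab (by omega) hb
  | succ N ih =>
    by_cases hround : (a + 1) / 2 < b / 2
    · obtain ⟨n, hnN, hgap, hdist⟩ := ih hround (by omega)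
      refine ⟨n, by omega, hgap.trans (sub_le_sub ?_ ?_), ?_⟩
      · rw [← dyadicPoint_succ_two_mul N]
        exact (dyadicPoint_strictMono _).monotone (by omega)
      · rw [← dyadicPoint_succ_two_mul N]
        exact (dyadicPoint_strictMono _).monotone (by omega)
      · rw [Finset.sum_Ico_succ_top (by omega), mul_add]
        exact (h.dist_roundInward_le hab.le hb).trans (add_le_add_left hdist _)
    · refine ⟨N + 1, le_rfl, inv_two_pow_le_dyadicPoint_sub hab, ?_⟩
      simpa using h.dist_le_two_mul_of_le_add_two hab (by omega) hb

theorem dist_le_mul_rpow {r M : ℝ} (h : DyadicStepBound f fun n => r ^ n * M) (hr₀ : 0 < r)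
    (hr₁ : r < 1) {s t : ℝ} (hs : IsDyadic01 s) (ht : IsDyadic01 t) :
    dist (f s) (f t) ≤ 2 * M / (1 - r) * |s - t| ^ (-Real.logb 2 r) := by
  have hM : 0 ≤ M := by simpa using h.nonneg 0
  have hα : 0 ≤ -Real.logb 2 r := neg_nonneg.2 (Real.logb_nonpos one_lt_two hr₀.le hr₁.le)
  have hC : 0 ≤ 2 * M / (1 - r) := div_nonneg (by positivity) (sub_nonneg.2 hr₁.le)
  wlog hst : s < t generalizing s t
  · obtain rfl | hts := (not_lt.1 hst).eq_or_lt
    · rw [dist_self]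
      exact mul_nonneg hC (by positivity)
    · rw [dist_comm, abs_sub_comm]
      exact this ht hs hts
  obtain ⟨N, a, b, -, hb, rfl, rfl⟩ := hs.exists_common_level ht
  obtain ⟨n, -, hgap, hdist⟩ :=
    h.exists_dist_le_two_mul_sum N ((dyadicPoint_strictMono N).lt_iff_lt.1 hst) hb
  rw [abs_sub_comm, abs_of_pos (sub_pos.2 hst)]
  calc dist (f (dyadicPoint N a)) (f (dyadicPoint N b))
      ≤ 2 * ∑ k ∈ Finset.Ico n (N + 1), r ^ k * M := hdist
    _ = 2 * M * ∑ k ∈ Finset.Ico n (N + 1), r ^ k := by rw [← Finset.sum_mul]; ring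
    _ ≤ 2 * M * (r ^ n / (1 - r)) := by gcongr; exact geom_sum_Ico_le_of_lt_one hr₀.le hr₁
    _ = 2 * M / (1 - r) * ((2 : ℝ) ^ n)⁻¹ ^ (-Real.logb 2 r) := by
      rw [inv_pow_rpow_neg_logb one_lt_two hr₀]; ring
    _ ≤ 2 * M / (1 - r) * (dyadicPoint N b - dyadicPoint N a) ^ (-Real.logb 2 r) :=
      mul_le_mul_of_nonneg_left (Real.rpow_le_rpow (by positivity) hgap hα) hC

end DyadicStepBound

theorem dyadic_midpoint_bound_implies_holder_general
    {X : Type*} [PseudoMetricSpace X] (c M : ℝ) (hc0 : 0 < c) (hc1 : c < 1) (γ : ℝ → X)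
    (h : ∀ (n k : ℕ), k < 2 ^ n →
      dist (γ ((k : ℝ) / 2 ^ n)) (γ (((k : ℝ) + 1) / 2 ^ n)) ≤ (1 - c) ^ n * M) :
    ∀ s t : ℝ, IsDyadic01 s → IsDyadic01 t →
      dist (γ s) (γ t) ≤ 2 * M / c * |s - t| ^ (-Real.logb 2 (1 - c)) := by
  intro s t hs ht
  have hstep : DyadicStepBound γ fun n => (1 - c) ^ n * M := fun n k hk => by
    simpa only [dyadicPoint, Nat.cast_add_one] using h n k hk
  simpa only [sub_sub_cancel] using
    hstep.dist_le_mul_rpow (sub_pos.2 hc1) (sub_lt_self 1 hc0) hs ht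

/-- **Dyadic Hölder estimate.**
Let `(X,d)` be a metric space, `c ∈ (0, 1/2]`, `M ≥ 0` and `α = -log₂ (1-c)`. If a map
`γ` defined on the dyadic rationals in `[0,1]` satisfies
`d(γ(k/2ⁿ), γ((k+1)/2ⁿ)) ≤ (1-c)ⁿ·M` for all `n` and `0 ≤ k < 2ⁿ`, then `γ` is α-Hölder
with constant `2M/c` on the dyadic rationals. -/
theorem dyadic_midpoint_bound_implies_holder
    {X : Type*} [MetricSpace X] (c M : ℝ)
    (hc0 : 0 < c) (hc2 : c ≤ 1 / 2) (hM : 0 ≤ M) (γ : ℝ → X)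
    (h : ∀ (n k : ℕ), k < 2 ^ n →
      dist (γ ((k : ℝ) / 2 ^ n)) (γ (((k : ℝ) + 1) / 2 ^ n)) ≤ (1 - c) ^ n * M) :
    ∀ s t : ℝ, IsDyadic01 s → IsDyadic01 t →
      dist (γ s) (γ t) ≤ 2 * M / c * |s - t| ^ (-Real.logb 2 (1 - c)) :=
  dyadic_midpoint_bound_implies_holder_general c M hc0 (hc2.trans_lt one_half_lt_one) γ h
end

section
/- Let c ∈ (0, 1/2] and let f be a real-valued function on the dyadic rationals in [0,1] with f(0) ≤ f(1), such that for every n ∈ ℕ and every integer 0 ≤ k < 2ⁿ one has c·(f((k+1)/2ⁿ) − f(k/2ⁿ)) ≤ f((2k+1)/2ⁿ⁺¹) − f(k/2ⁿ) ≤ (1−c)·(f((k+1)/2ⁿ) − f(k/2ⁿ)). Then for every n ∈ ℕ and every integer 0 ≤ k < 2ⁿ, 0 ≤ f((k+1)/2ⁿ) − f(k/2ⁿ) ≤ (1−c)ⁿ·(f(1) − f(0)). -/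
/-!
A midpoint value at ratio between `c` and `1 - c` splits an increment into two pieces, and the
range `[c, 1 - c]` is symmetric under `t ↦ 1 - t`, so both pieces lie between `c` and `1 - c` times
the parent increment. Descending the binary tree of dyadic intervals, these ratios multiply.
-/

theorem dyadic_induction {P : ℕ → ℕ → Prop} (root : P 0 0)
    (left : ∀ n k, k < 2 ^ n → P n k → P (n + 1) (2 * k))
    (right : ∀ n k, k < 2 ^ n → P n k → P (n + 1) (2 * k + 1)) :
    ∀ n k, k < 2 ^ n → P n k := by
  intro n
  induction n with
  | zero =>
    intro k hk
    obtain rfl : k = 0 := by simpa using hk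
    exact root
  | succ n ih =>
    intro k hk
    obtain ⟨j, rfl | rfl⟩ := k.even_or_odd'
    · have hj : j < 2 ^ n := by lia
      exact left n j hj (ih j hj)
    · have hj : j < 2 ^ n := by lia
      exact right n j hj (ih j hj)

section Increment

variable {K E : Type*} [DivisionRing K] [AddGroup E]

/-- The increment of `f` over the `k`-th dyadic interval `[k / 2 ^ n, (k + 1) / 2 ^ n]` of
level `n`, counted from `k = 0`. -/
def dyadicIncrement (f : K → E) (n k : ℕ) : E :=
  f (((k : K) + 1) / 2 ^ n) - f ((k : K) / 2 ^ n)

theorem dyadicIncrement_zero_zero (f : K → E) : dyadicIncrement f 0 0 = f 1 - f 0 := by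
  simp [dyadicIncrement]

variable [NeZero (2 : K)]

theorem two_mul_div_two_pow_succ (x : K) (n : ℕ) : 2 * x / 2 ^ (n + 1) = x / 2 ^ n := by
  rw [two_mul, ← mul_two, pow_succ, mul_div_mul_right x _ two_ne_zero]

theorem dyadicIncrement_succ_two_mul (f : K → E) (n k : ℕ) :
    dyadicIncrement f (n + 1) (2 * k) =
      f ((2 * (k : K) + 1) / 2 ^ (n + 1)) - f ((k : K) / 2 ^ n) := by
  rw [dyadicIncrement, Nat.cast_mul, Nat.cast_two, two_mul_div_two_pow_succ]

theorem dyadicIncrement_succ_two_mul_add_one (f : K → E) (n k : ℕ) :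
    dyadicIncrement f (n + 1) (2 * k + 1) =
      f (((k : K) + 1) / 2 ^ n) - f ((2 * (k : K) + 1) / 2 ^ (n + 1)) := by
  have right_endpoint : 2 * (k : K) + 1 + 1 = 2 * (k + 1) := by
    rw [mul_add, mul_one, add_assoc, one_add_one_eq_two]
  rw [dyadicIncrement, Nat.cast_succ, Nat.cast_mul, Nat.cast_two, right_endpoint,
    two_mul_div_two_pow_succ]

theorem dyadicIncrement_succ_add (f : K → E) (n k : ℕ) :
    dyadicIncrement f (n + 1) (2 * k + 1) + dyadicIncrement f (n + 1) (2 * k) =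
      dyadicIncrement f n k := by
  rw [dyadicIncrement_succ_two_mul, dyadicIncrement_succ_two_mul_add_one, sub_add_sub_cancel,
    dyadicIncrement]

end Increment

section OrderedModule

variable {R E : Type*} [Ring R] [AddCommGroup E] [PartialOrder E] [Module R E]

theorem sub_mem_Icc_smul_one_sub_smul [IsOrderedAddMonoid E] {c : R} {x y : E}
    (hy : y ∈ Set.Icc (c • x) ((1 - c) • x)) : x - y ∈ Set.Icc (c • x) ((1 - c) • x) := by
  have lower_endpoint : x - (1 - c) • x = c • x := by rw [sub_smul, one_smul, sub_sub_cancel]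
  have upper_endpoint : x - c • x = (1 - c) • x := by rw [sub_smul, one_smul]
  rwa [Set.sub_mem_Icc_iff_right, lower_endpoint, upper_endpoint]

variable [PartialOrder R] [PosSMulMono R E]

theorem mem_Icc_pow_succ_smul {a b : R} (ha : 0 ≤ a) (hb : 0 ≤ b) {x y z : E} {n : ℕ}
    (hy : y ∈ Set.Icc (a ^ n • x) (b ^ n • x)) (hz : z ∈ Set.Icc (a • y) (b • y)) :
    z ∈ Set.Icc (a ^ (n + 1) • x) (b ^ (n + 1) • x) := by
  rw [pow_succ', pow_succ', mul_smul, mul_smul]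
  exact ⟨(smul_le_smul_of_nonneg_left hy.1 ha).trans hz.1,
    hz.2.trans (smul_le_smul_of_nonneg_left hy.2 hb)⟩

variable [IsOrderedRing R] [IsOrderedAddMonoid E] {K : Type*} [DivisionRing K] [NeZero (2 : K)]

theorem dyadic_increment_geometric_decay_general {c : R} (hc0 : 0 ≤ c) (hc1 : c ≤ 1) (f : K → E)
    (h : ∀ n k : ℕ, k < 2 ^ n →
      f ((2 * (k : K) + 1) / 2 ^ (n + 1)) - f ((k : K) / 2 ^ n) ∈
        Set.Icc (c • dyadicIncrement f n k) ((1 - c) • dyadicIncrement f n k)) :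
    ∀ n k : ℕ, k < 2 ^ n →
      dyadicIncrement f n k ∈ Set.Icc (c ^ n • (f 1 - f 0)) ((1 - c) ^ n • (f 1 - f 0)) := by
  have left_mem (n k : ℕ) (hk : k < 2 ^ n) : dyadicIncrement f (n + 1) (2 * k) ∈
      Set.Icc (c • dyadicIncrement f n k) ((1 - c) • dyadicIncrement f n k) := by
    rw [dyadicIncrement_succ_two_mul]
    exact h n k hk
  have right_mem (n k : ℕ) (hk : k < 2 ^ n) : dyadicIncrement f (n + 1) (2 * k + 1) ∈
      Set.Icc (c • dyadicIncrement f n k) ((1 - c) • dyadicIncrement f n k) := by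
    rw [eq_sub_of_add_eq (dyadicIncrement_succ_add f n k)]
    exact sub_mem_Icc_smul_one_sub_smul (left_mem n k hk)
  have hc1' : 0 ≤ 1 - c := sub_nonneg.2 hc1
  refine dyadic_induction ?_ (fun n k hk ih ↦ ?_) (fun n k hk ih ↦ ?_)
  · simp [dyadicIncrement_zero_zero]
  · exact mem_Icc_pow_succ_smul hc0 hc1' ih (left_mem n k hk)
  · exact mem_Icc_pow_succ_smul hc0 hc1' ih (right_mem n k hk)

end OrderedModule

/-- **Geometric decay of dyadic increments.**
Let `c ∈ (0, 1/2]` and `f` a real function on the dyadic rationals in `[0,1]` with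
`f 0 ≤ f 1` such that the value at each dyadic midpoint `(2k+1)/2ⁿ⁺¹` lies in the
`c`-controlled convex range between the values at `k/2ⁿ` and `(k+1)/2ⁿ`. Then each
successive dyadic increment at level `n` lies in `[0, (1-c)ⁿ·(f 1 − f 0)]`. -/
theorem dyadic_increment_geometric_decay
    (c : ℝ) (hc0 : 0 < c) (hc2 : c ≤ 1 / 2)
    (f : ℝ → ℝ) (h01 : f 0 ≤ f 1)
    (h : ∀ (n k : ℕ), k < 2 ^ n →
      c * (f (((k : ℝ) + 1) / 2 ^ n) - f ((k : ℝ) / 2 ^ n)) ≤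
          f ((2 * (k : ℝ) + 1) / 2 ^ (n + 1)) - f ((k : ℝ) / 2 ^ n) ∧
        f ((2 * (k : ℝ) + 1) / 2 ^ (n + 1)) - f ((k : ℝ) / 2 ^ n) ≤
          (1 - c) * (f (((k : ℝ) + 1) / 2 ^ n) - f ((k : ℝ) / 2 ^ n))) :
    ∀ (n k : ℕ), k < 2 ^ n →
      0 ≤ f (((k : ℝ) + 1) / 2 ^ n) - f ((k : ℝ) / 2 ^ n) ∧
        f (((k : ℝ) + 1) / 2 ^ n) - f ((k : ℝ) / 2 ^ n) ≤ (1 - c) ^ n * (f 1 - f 0) := by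
  intro n k hk
  obtain ⟨lower, upper⟩ :=
    dyadic_increment_geometric_decay_general hc0.le (by linarith) f h n k hk
  exact ⟨(mul_nonneg (pow_nonneg hc0.le n) (sub_nonneg.2 h01)).trans lower, upper⟩
end

section
/- Let σ be a function assigning to each pair of dyadic rationals s < t in [0,1] a value σ(s,t) ∈ [0, ∞), such that σ(r,t) ≥ σ(r,s) + σ(s,t) for all dyadic rationals r < s < t in [0,1], and such that for every n ∈ ℕ and every integer 0 ≤ k < 2ⁿ one has σ(k/2ⁿ, (2k+1)/2ⁿ⁺¹) = σ((2k+1)/2ⁿ⁺¹, (k+1)/2ⁿ) = (1/2)·σ(k/2ⁿ, (k+1)/2ⁿ). Then σ(s,t) = (t − s)·σ(0,1) for all dyadic rationals s < t in [0,1]. -/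
/-!
Repeated bisection gives `σ(k/2ⁿ, (k+1)/2ⁿ) = 2⁻ⁿ σ(0,1)`, and adding these values along a
subdivision yields `(t - s) σ(0,1) ≤ σ(s,t)`. Superadditivity along `0 ≤ s < t ≤ 1` bounds
`σ(0,s) + σ(s,t) + σ(t,1)` by `σ(0,1)`, which is also the sum of the three lower bounds, so each
of them is an equality.
-/

/-- The reverse triangle inequality for `σ` along increasing triples of points of `S`, as
satisfied by a time separation function along a causal curve. Values of `σ` off the increasing
pairs in `S` are unconstrained. -/
def SuperadditiveOn {α E : Type*} [LT α] [Add E] [LE E] (S : Set α) (σ : α → α → E) : Prop :=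
  ∀ ⦃r s t⦄, r ∈ S → s ∈ S → t ∈ S → r < s → s < t → σ r s + σ s t ≤ σ r t

/-- The midpoint of each dyadic interval `[k/2ⁿ, (k+1)/2ⁿ] ⊆ [0,1]` halves its `σ`-value. The
midpoint is written in lowest terms, as `(2k+1)/2ⁿ⁺¹`. -/
def BisectsDyadicIntervals {E : Type*} [AddCommMonoid E] [Module ℝ E] (σ : ℝ → ℝ → E) : Prop :=
  ∀ n k : ℕ, k < 2 ^ n →
    σ (k / 2 ^ n) ((2 * k + 1) / 2 ^ (n + 1)) = (2⁻¹ : ℝ) • σ (k / 2 ^ n) ((k + 1) / 2 ^ n) ∧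
    σ ((2 * k + 1) / 2 ^ (n + 1)) ((k + 1) / 2 ^ n) = (2⁻¹ : ℝ) • σ (k / 2 ^ n) ((k + 1) / 2 ^ n)

theorem SuperadditiveOn.sum_Ico_le {α E : Type*} [Preorder α] [AddCommMonoid E] [Preorder E]
    [AddRightMono E] {S : Set α} {σ : α → α → E} (hσ : SuperadditiveOn S σ)
    {x : ℕ → α} {a b : ℕ} (hab : a < b) (hx : StrictMonoOn x (Set.Icc a b))
    (hxS : Set.MapsTo x (Set.Icc a b) S) :
    ∑ i ∈ Finset.Ico a b, σ (x i) (x (i + 1)) ≤ σ (x a) (x b) := by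
  induction b, hab using Nat.le_induction with
  | base => simp
  | succ b hab ih =>
    have hsub : Set.Icc a b ⊆ Set.Icc a (b + 1) := Set.Icc_subset_Icc_right b.le_succ
    have ha : a ∈ Set.Icc a (b + 1) := ⟨le_rfl, by omega⟩
    have hb : b ∈ Set.Icc a (b + 1) := ⟨by omega, by omega⟩
    have hb' : b + 1 ∈ Set.Icc a (b + 1) := ⟨by omega, le_rfl⟩
    calc ∑ i ∈ Finset.Ico a (b + 1), σ (x i) (x (i + 1))
        = ∑ i ∈ Finset.Ico a b, σ (x i) (x (i + 1)) + σ (x b) (x (b + 1)) :=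
          Finset.sum_Ico_succ_top (by omega) _
      _ ≤ σ (x a) (x b) + σ (x b) (x (b + 1)) := by
          gcongr
          exact ih (hx.mono hsub) (hxS.mono_left hsub)
      _ ≤ σ (x a) (x (b + 1)) :=
          hσ (hxS ha) (hxS hb) (hxS hb') (hx ha hb hab) (hx hb hb' b.lt_succ_self)

theorem SuperadditiveOn.eq_sub_of_sub_le {α E : Type*} [PartialOrder α] [AddCommGroup E]
    [PartialOrder E] [IsOrderedAddMonoid E] {S : Set α} {σ : α → α → E}
    (hσ : SuperadditiveOn S σ) {a b : α} (ha : IsLeast S a) (hb : IsGreatest S b) {f : α → E}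
    (hf : ∀ s ∈ S, ∀ t ∈ S, s < t → f t - f s ≤ σ s t) (hab : σ a b = f b - f a)
    {s t : α} (hs : s ∈ S) (ht : t ∈ S) (hst : s < t) : σ s t = f t - f s := by
  have le_from_left : σ a t ≤ f t - f a := by
    rcases (hb.2 ht).eq_or_lt with rfl | htb
    · exact hab.le
    · have hat : a < t := (ha.2 hs).trans_lt hst
      calc σ a t ≤ σ a b - σ t b := le_sub_right_of_add_le (hσ ha.1 ht hb.1 hat htb)
        _ ≤ (f b - f a) - (f b - f t) := sub_le_sub hab.le (hf t ht b hb.1 htb)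
        _ = f t - f a := sub_sub_sub_cancel_left _ _ _
  refine le_antisymm ?_ (hf s hs t ht hst)
  rcases (ha.2 hs).eq_or_lt with rfl | has
  · exact le_from_left
  · calc σ s t ≤ σ a t - σ a s := le_sub_left_of_add_le (hσ ha.1 hs ht has hst)
      _ ≤ (f t - f a) - (f s - f a) := sub_le_sub le_from_left (hf a ha.1 s hs has)
      _ = f t - f s := sub_sub_sub_cancel_right _ _ _

theorem isLeast_isDyadic01 : IsLeast {r | IsDyadic01 r} 0 :=
  ⟨⟨0, 0, by simp, by simp⟩, by rintro _ ⟨n, k, -, rfl⟩; positivity⟩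

theorem isGreatest_isDyadic01 : IsGreatest {r | IsDyadic01 r} 1 := by
  refine ⟨⟨0, 1, by simp, by simp⟩, ?_⟩
  rintro _ ⟨n, k, hk, rfl⟩
  exact div_le_one_of_le₀ (mod_cast hk) (by positivity)

theorem IsDyadic01.exists_common_denominator {s t : ℝ} (hs : IsDyadic01 s) (ht : IsDyadic01 t) :
    ∃ n a b : ℕ, a ≤ 2 ^ n ∧ b ≤ 2 ^ n ∧ s = a / 2 ^ n ∧ t = b / 2 ^ n := by
  obtain ⟨m, a, ha, rfl⟩ := hs
  obtain ⟨n, b, hb, rfl⟩ := ht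
  refine ⟨m + n, a * 2 ^ n, 2 ^ m * b, ?_, ?_, ?_, ?_⟩
  · rw [pow_add]; gcongr
  · rw [pow_add]; gcongr
  · push_cast; rw [pow_add, mul_div_mul_right _ _ (by positivity)]
  · push_cast; rw [pow_add, mul_div_mul_left _ _ (by positivity)]

theorem BisectsDyadicIntervals.eq_inv_two_pow_smul {E : Type*} [AddCommMonoid E] [Module ℝ E]
    {σ : ℝ → ℝ → E} (hσ : BisectsDyadicIntervals σ) (n : ℕ) {k : ℕ} (hk : k < 2 ^ n) :
    σ (k / 2 ^ n) ((k + 1) / 2 ^ n) = ((2 : ℝ) ^ n)⁻¹ • σ 0 1 := by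
  induction n generalizing k with
  | zero =>
    obtain rfl : k = 0 := by simpa using hk
    simp
  | succ n ih =>
    have halve : ∀ x : ℝ, 2 * x / 2 ^ (n + 1) = x / 2 ^ n := fun x => by
      rw [pow_succ', mul_div_mul_left _ _ two_ne_zero]
    have hscale : (2⁻¹ : ℝ) • ((2 : ℝ) ^ n)⁻¹ • σ 0 1 = ((2 : ℝ) ^ (n + 1))⁻¹ • σ 0 1 := by
      rw [smul_smul, ← mul_inv, ← pow_succ']
    rcases Nat.even_or_odd' k with ⟨j, rfl | rfl⟩
    · have hj : j < 2 ^ n := by omega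
      push_cast
      rw [halve, (hσ n j hj).1, ih hj, hscale]
    · have hj : j < 2 ^ n := by omega
      have hright : (2 * (j : ℝ) + 1 + 1) = 2 * (j + 1) := by ring
      push_cast
      rw [hright, halve, (hσ n j hj).2, ih hj, hscale]

section Dyadic

variable {E : Type*} [AddCommGroup E] [PartialOrder E] [IsOrderedAddMonoid E] [Module ℝ E]
  {σ : ℝ → ℝ → E}

theorem BisectsDyadicIntervals.sub_smul_le (hmid : BisectsDyadicIntervals σ)
    (hsuper : SuperadditiveOn {r | IsDyadic01 r} σ) {s t : ℝ} (hs : IsDyadic01 s)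
    (ht : IsDyadic01 t) (hst : s < t) : (t - s) • σ 0 1 ≤ σ s t := by
  obtain ⟨n, a, b, -, hb, rfl, rfl⟩ := hs.exists_common_denominator ht
  have hab : a < b := by
    rwa [div_lt_div_iff_of_pos_right (by positivity), Nat.cast_lt] at hst
  let x : ℕ → ℝ := fun k => k / 2 ^ n
  have hx : StrictMono x := fun i j hij =>
    div_lt_div_of_pos_right (mod_cast hij) (by positivity)
  have hxS : Set.MapsTo x (Set.Icc a b) {r | IsDyadic01 r} := fun i hi =>
    ⟨n, i, hi.2.trans hb, rfl⟩
  have hstep : ∀ i ∈ Finset.Ico a b, σ (x i) (x (i + 1)) = ((2 : ℝ) ^ n)⁻¹ • σ 0 1 := by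
    intro i hi
    simpa only [x, Nat.cast_succ] using
      hmid.eq_inv_two_pow_smul n ((Finset.mem_Ico.1 hi).2.trans_le hb)
  calc ((b : ℝ) / 2 ^ n - a / 2 ^ n) • σ 0 1
      = (b - a) • ((2 : ℝ) ^ n)⁻¹ • σ 0 1 := by
        rw [← Nat.cast_smul_eq_nsmul ℝ, smul_smul, Nat.cast_sub hab.le, ← sub_div, div_eq_mul_inv]
    _ = ∑ i ∈ Finset.Ico a b, σ (x i) (x (i + 1)) := by
        rw [Finset.sum_congr rfl hstep, Finset.sum_const, Nat.card_Ico]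
    _ ≤ σ (x a) (x b) := hsuper.sum_Ico_le hab (hx.strictMonoOn _) hxS

theorem superadditive_bisection_linear_on_dyadics_general
    (hsuper : SuperadditiveOn {r | IsDyadic01 r} σ) (hmid : BisectsDyadicIntervals σ)
    {s t : ℝ} (hs : IsDyadic01 s) (ht : IsDyadic01 t) (hst : s < t) :
    σ s t = (t - s) • σ 0 1 := by
  rw [sub_smul]
  refine hsuper.eq_sub_of_sub_le (f := fun r => r • σ 0 1) isLeast_isDyadic01
    isGreatest_isDyadic01 (fun r hr u hu hru => ?_) (by simp) hs ht hst
  simpa only [sub_smul] using hmid.sub_smul_le hsuper hr hu hru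

end Dyadic

/-- **Exact bisection implies linearity on dyadic rationals.**
Let `σ` assign to each pair of dyadic rationals `s < t` in `[0,1]` a value in `[0,∞)`,
satisfying the reverse (super-additive) triangle inequality, and suppose each dyadic
midpoint exactly bisects the σ-value of its parent interval. Then
`σ(s,t) = (t − s)·σ(0,1)` for all dyadic rationals `s < t` in `[0,1]`. -/
theorem superadditive_bisection_linear_on_dyadics
    (σ : ℝ → ℝ → ℝ)
    (hnn : ∀ s t : ℝ, IsDyadic01 s → IsDyadic01 t → s < t → 0 ≤ σ s t)
    (hsuper : ∀ r s t : ℝ, IsDyadic01 r → IsDyadic01 s → IsDyadic01 t →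
      r < s → s < t → σ r s + σ s t ≤ σ r t)
    (hmid : ∀ (n k : ℕ), k < 2 ^ n →
      σ ((k : ℝ) / 2 ^ n) ((2 * (k : ℝ) + 1) / 2 ^ (n + 1)) =
          σ ((k : ℝ) / 2 ^ n) (((k : ℝ) + 1) / 2 ^ n) / 2 ∧
        σ ((2 * (k : ℝ) + 1) / 2 ^ (n + 1)) (((k : ℝ) + 1) / 2 ^ n) =
          σ ((k : ℝ) / 2 ^ n) (((k : ℝ) + 1) / 2 ^ n) / 2) :
    ∀ s t : ℝ, IsDyadic01 s → IsDyadic01 t → s < t → σ s t = (t - s) * σ 0 1 :=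
  fun _ _ => superadditive_bisection_linear_on_dyadics_general hsuper
    (by simpa only [BisectsDyadicIntervals, smul_eq_mul, div_eq_inv_mul] using hmid)
end

section
/- Let X be a topological space and let R be a transitive relation on X such that every point of X has a neighbourhood U with the property that whenever p_n → p and q_n → q with p_n, q_n ∈ U for all n, p, q ∈ cl(U), and R(p_n, q_n) for all n, then R(p, q). Let γ : [0,1] → X be a continuous map such that R(γ(s), γ(t)) for all dyadic rationals s < t in [0,1]. Then R(γ(s), γ(t)) for all reals 0 ≤ s < t ≤ 1. -/
/-! Local closedness is inherited along continuous maps, so the relation `R (γ s) (γ t)` on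
parameters is itself locally closed. Approaching `s` from the right through dense parameters inside
a good neighbourhood of `s` relates `s` to some dense `d ∈ (s, t)`; symmetrically, some dense
`e ∈ (d, t)` is related to `t`. Transitivity along `s < d < e < t` gives the claim. -/

open Filter Set Topology

/-- A relation on a topological space is locally closed if every point has a neighbourhood `U` such
that the relation passes to limits of sequences in `U`. For the causal relation of a Lorentzian
pre-length space this is local causal closedness. -/
def IsLocallyClosedRel {X : Type*} [TopologicalSpace X] (R : X → X → Prop) : Prop :=
  ∀ x : X, ∃ U ∈ 𝓝 x, ∀ (p q : X) (pn qn : ℕ → X),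
    (∀ n, pn n ∈ U) → (∀ n, qn n ∈ U) → p ∈ closure U → q ∈ closure U →
    Tendsto pn atTop (𝓝 p) → Tendsto qn atTop (𝓝 q) → (∀ n, R (pn n) (qn n)) → R p q

namespace IsLocallyClosedRel

section TopologicalSpace

variable {X Y : Type*} [TopologicalSpace X] [TopologicalSpace Y] {R : X → X → Prop}

theorem swap (hR : IsLocallyClosedRel R) : IsLocallyClosedRel (Function.swap R) := by
  intro x
  obtain ⟨U, hU, hlim⟩ := hR x
  exact ⟨U, hU, fun p q pn qn hpn hqn hp hq hpnp hqnq h ↦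
    hlim q p qn pn hqn hpn hq hp hqnq hpnp h⟩

theorem preimage (hR : IsLocallyClosedRel R) {f : Y → X} (hf : Continuous f) :
    IsLocallyClosedRel (f ⁻¹'o R) := by
  intro y
  obtain ⟨U, hU, hlim⟩ := hR (f y)
  have hcl : ∀ {z}, z ∈ closure (f ⁻¹' U) → f z ∈ closure U :=
    fun hz ↦ hf.closure_preimage_subset U hz
  exact ⟨f ⁻¹' U, hf.continuousAt hU, fun p q pn qn hpn hqn hp hq hpnp hqnq h ↦
    hlim (f p) (f q) (f ∘ pn) (f ∘ qn) hpn hqn (hcl hp) (hcl hq)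
      ((hf.tendsto p).comp hpnp) ((hf.tendsto q).comp hqnq) h⟩

end TopologicalSpace

section LinearOrder

variable {α : Type*} [LinearOrder α] [TopologicalSpace α] [OrderTopology α] [DenselyOrdered α]
  [FirstCountableTopology α] {R : α → α → Prop} {D : Set α} {s t : α}

theorem exists_mem_Ioo_rel_left (hR : IsLocallyClosedRel R) (hD : Dense D)
    (hRD : ∀ d ∈ D, ∀ e ∈ D, d < e → R d e) (hst : s < t) : ∃ d ∈ D ∩ Ioo s t, R s d := by
  obtain ⟨U, hU, hlim⟩ := hR s
  obtain ⟨c, ⟨hsc, hct⟩, hcU⟩ := exists_Ico_subset_of_mem_nhds' hU hst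
  obtain ⟨u, hu_anti, hu_mem, hu_lim⟩ := hD.exists_seq_strictAnti_tendsto_of_lt hsc
  have huU (n : ℕ) : u n ∈ U := hcU (Ioo_subset_Ico_self (hu_mem n).1)
  have hu_rel (n : ℕ) : R (u (n + 1)) (u 0) :=
    hRD _ (hu_mem _).2 _ (hu_mem 0).2 (hu_anti n.succ_pos)
  refine ⟨u 0, ⟨(hu_mem 0).2, (hu_mem 0).1.1, (hu_mem 0).1.2.trans_le hct⟩, ?_⟩
  exact hlim s (u 0) (fun n ↦ u (n + 1)) (fun _ ↦ u 0) (fun n ↦ huU (n + 1)) (fun _ ↦ huU 0)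
    (subset_closure (mem_of_mem_nhds hU)) (subset_closure (huU 0))
    ((tendsto_add_atTop_iff_nat 1).2 hu_lim) tendsto_const_nhds hu_rel

theorem exists_mem_Ioo_rel_right (hR : IsLocallyClosedRel R) (hD : Dense D)
    (hRD : ∀ d ∈ D, ∀ e ∈ D, d < e → R d e) (hst : s < t) : ∃ e ∈ D ∩ Ioo s t, R e t := by
  obtain ⟨e, ⟨heD, hte, hes⟩, h⟩ := exists_mem_Ioo_rel_left (α := αᵒᵈ) hR.swap hD
    (fun d hd e he hde ↦ hRD e he d hd hde) hst
  exact ⟨e, ⟨heD, hes, hte⟩, h⟩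

theorem rel_of_lt_of_dense [IsTrans α R] (hR : IsLocallyClosedRel R) (hD : Dense D)
    (hRD : ∀ d ∈ D, ∀ e ∈ D, d < e → R d e) (hst : s < t) : R s t := by
  obtain ⟨d, ⟨hd, -, hdt⟩, hsd⟩ := hR.exists_mem_Ioo_rel_left hD hRD hst
  obtain ⟨e, ⟨he, hde, -⟩, het⟩ := hR.exists_mem_Ioo_rel_right hD hRD hdt
  exact _root_.trans hsd (_root_.trans (hRD d hd e he hde) het)

end LinearOrder

end IsLocallyClosedRel

theorem rel_on_dyadics_extends_general {X α : Type*} [TopologicalSpace X] [LinearOrder α]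
    [TopologicalSpace α] [OrderTopology α] [DenselyOrdered α] [FirstCountableTopology α]
    {R : X → X → Prop} [IsTrans X R] (hR : IsLocallyClosedRel R) {γ : α → X} (hγ : Continuous γ)
    {D : Set α} (hD : Dense D) (hRD : ∀ d ∈ D, ∀ e ∈ D, d < e → R (γ d) (γ e)) {s t : α}
    (hst : s < t) : R (γ s) (γ t) :=
  (hR.preimage hγ).rel_of_lt_of_dense hD hRD hst

theorem exists_int_div_pow_btwn {K : Type*} [Field K] [LinearOrder K] [IsStrictOrderedRing K]
    [Archimedean K] {b : ℕ} (hb : 1 < b) {x y : K} (hxy : x < y) :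
    ∃ (n : ℕ) (z : ℤ), x < z / (b : K) ^ n ∧ z / (b : K) ^ n < y := by
  obtain ⟨n, hn⟩ := pow_unbounded_of_one_lt (y - x)⁻¹ (Nat.one_lt_cast.2 hb)
  obtain ⟨z, hxz, hzy⟩ := exists_div_btwn hxy (n := b ^ n) (mod_cast hn)
  exact ⟨n, z, mod_cast hxz, mod_cast hzy⟩

theorem isDyadic01_int_div_two_pow {n : ℕ} {z : ℤ} (h : (z / 2 ^ n : ℝ) ∈ Icc 0 1) :
    IsDyadic01 (z / 2 ^ n) := by
  have h2n : (0 : ℝ) < 2 ^ n := by positivity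
  have hz_nonneg : (0 : ℝ) ≤ z := by simpa only [zero_mul] using (le_div_iff₀ h2n).1 h.1
  lift z to ℕ using mod_cast hz_nonneg
  have hz_le : (z : ℝ) ≤ 2 ^ n := (div_le_one h2n).1 h.2
  exact ⟨n, z, mod_cast hz_le, rfl⟩

theorem dense_setOf_isDyadic01 : Dense {x : Icc (0 : ℝ) 1 | IsDyadic01 x} := by
  refine dense_of_exists_between fun x y hxy ↦ ?_
  obtain ⟨n, z, hxz, hzy⟩ := exists_int_div_pow_btwn one_lt_two (Subtype.coe_lt_coe.2 hxy)
  rw [Nat.cast_ofNat] at hxz hzy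
  have hz : (z / 2 ^ n : ℝ) ∈ Icc 0 1 := ⟨x.2.1.trans hxz.le, hzy.le.trans y.2.2⟩
  exact ⟨⟨_, hz⟩, isDyadic01_int_div_two_pow hz, hxz, hzy⟩

/-- **Causality on dyadic parameters extends to all parameters.**
Let `X` be a topological space and `R` a transitive relation on `X` that is locally
closed: every point has a neighbourhood `U` such that `R` passes to limits of sequences
in `U` with limits in `cl U`. If `γ : [0,1] → X` is continuous and `R (γ s) (γ t)` holds
for all dyadic rationals `s < t` in `[0,1]`, then `R (γ s) (γ t)` holds for all reals
`0 ≤ s < t ≤ 1`. -/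
theorem rel_on_dyadics_extends
    {X : Type*} [TopologicalSpace X]
    (R : X → X → Prop) (hR : Transitive R)
    (hclosed : ∀ x : X, ∃ U ∈ nhds x, ∀ (p q : X) (pn qn : ℕ → X),
      (∀ n, pn n ∈ U) → (∀ n, qn n ∈ U) → p ∈ closure U → q ∈ closure U →
      Filter.Tendsto pn Filter.atTop (nhds p) → Filter.Tendsto qn Filter.atTop (nhds q) →
      (∀ n, R (pn n) (qn n)) → R p q)
    (γ : ℝ → X) (hγ : ContinuousOn γ (Set.Icc 0 1))
    (hdy : ∀ s t : ℝ, IsDyadic01 s → IsDyadic01 t → s < t → R (γ s) (γ t)) :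
    ∀ s t : ℝ, 0 ≤ s → s < t → t ≤ 1 → R (γ s) (γ t) := by
  have : IsTrans X R := ⟨fun _ _ _ hxy hyz ↦ hR hxy hyz⟩
  exact fun s t hs hst ht ↦ rel_on_dyadics_extends_general hclosed hγ.domRestrict
    dense_setOf_isDyadic01 (fun d hd e he hde ↦ hdy d e hd he hde)
    (s := ⟨s, hs, hst.le.trans ht⟩) (t := ⟨t, hs.trans hst.le, ht⟩) hst
end
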